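/- There exists β₀ > 2 such that for every β > β₀ the following holds: for every α > 0, all K, N, m ∈ ℕ and every η > 0 there exist homeomorphisms G̃ : R_{m,η} → R_{m,13} and G : R_{m,13} → R_{m,η} such that (i) G̃(C_{A,K,m}) = C_{B,m} and G(C_{B,m}) = C_{A,K,m}; (ii) G(G̃(x)) = x for every x ∈ ∂R_{m,η} and for every x ∈ C_{A,K,m}; (iii) G̃ is locally bi-Lipschitz on R_{m,η} \ C_{A,K,m} and G is locally bi-Lipschitz on R_{m,13} \ C_{B,m}; (iv) G̃ is Lipschitz on R_{m,η}, with Lipschitz constant depending only on K, α and η (in particular independent of N, m and β); (v) at every point x ∈ C_{A,K,m} the classical differential of G̃ exists and equals 0. -/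

import Mathlib

noncomputable section
open MeasureTheory Set Filter
open scoped NNReal

/-- `ℝ⁴` as Euclidean space. -/
abbrev E4 : Type := EuclideanSpace ℝ (Fin 4)

/-- The box `R_{m,t} = [-2m-5, 2m+5]³ × [-1-t, 1+t]`. -/
def Rbox (m : ℕ) (t : ℝ) : Set E4 :=
  {x | |x 0| ≤ 2 * (m : ℝ) + 5 ∧ |x 1| ≤ 2 * (m : ℝ) + 5 ∧ |x 2| ≤ 2 * (m : ℝ) + 5 ∧
    |x 3| ≤ 1 + t}

/-- The sequence `r̃_k(K)` defining the fat Cantor-type set `C_{A,K}`. -/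
def rA (α : ℝ) (K : ℕ) (k : ℕ) : ℝ :=
  ((2 : ℝ) ^ k)⁻¹ * (1 + ((K : ℝ) + k + 1) ^ (-α)) / (1 + ((K : ℝ) + 1) ^ (-α))

/-- The sequence `r_k = 2^{-k(β+1)}` defining the thin Cantor-type set `C_B`. -/
def rB (β : ℝ) (k : ℕ) : ℝ := (2 : ℝ) ^ (-(β + 1) * (k : ℝ))

/-- One-dimensional `k`-th generation `U_k^1 ⊆ ℝ` of the Cantor-type construction. -/
def cantorU1 (s : ℕ → ℝ) (k : ℕ) : Set ℝ :=
  ⋃ (w : Fin k → ℝ) (_ : ∀ j, w j = 1 ∨ w j = -1),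
    {t | |t - 2⁻¹ * ∑ j : Fin k, s j.1 * w j| < s k}

/-- One-dimensional Cantor-type set `C(1) ⊆ ℝ`. -/
def cantorTypeSet1 (s : ℕ → ℝ) : Set ℝ :=
  ⋂ (k : ℕ) (_ : 1 ≤ k), cantorU1 s k

/-- The translation vector `(2n₁, 2n₂, 2n₃, 0)`. -/
def tr (n₁ n₂ n₃ : ℤ) : E4 :=
  (2 * (n₁ : ℝ)) • EuclideanSpace.single 0 (1 : ℝ) +
  (2 * (n₂ : ℝ)) • EuclideanSpace.single 1 (1 : ℝ) +
  (2 * (n₃ : ℝ)) • EuclideanSpace.single 2 (1 : ℝ)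

/-- The `m`-Cantor plate `⋃_{|nᵢ| ≤ m} (C(4) + (2n₁,2n₂,2n₃,0))` built from the
Cantor-type set associated to a sequence `s` (the four-dimensional Cantor set
being the fourfold product of the one-dimensional one). -/
def cantorPlate (s : ℕ → ℝ) (m : ℕ) : Set E4 :=
  {x | ∃ n₁ n₂ n₃ : ℤ, |n₁| ≤ (m : ℤ) ∧ |n₂| ≤ (m : ℤ) ∧ |n₃| ≤ (m : ℤ) ∧
    ∀ j, (x - tr n₁ n₂ n₃) j ∈ cantorTypeSet1 s}

/-- `f` is locally bi-Lipschitz on `S`. -/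
def LocallyBiLipschitzOn (f : E4 → E4) (S : Set E4) : Prop :=
  ∀ x ∈ S, ∃ U : Set E4, IsOpen U ∧ x ∈ U ∧ ∃ L : ℝ, 0 < L ∧
    ∀ y ∈ U ∩ S, ∀ z ∈ U ∩ S,
      L⁻¹ * dist y z ≤ dist (f y) (f z) ∧ dist (f y) (f z) ≤ L * dist y z


/-! ### One-dimensional combinatorics -/

/-- A scale sequence. -/
structure Scale (s : ℕ → ℝ) : Prop where
  pos : ∀ k, 0 < s k
  zero : s 0 = 1
  lt : ∀ k, 2 * s (k + 1) < s k

/-- A nearest-point map onto a `2`-separated set of reals. -/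
structure Base (b : ℝ → ℝ) : Prop where
  sep : ∀ t u, b t ≠ b u → 2 ≤ |b t - b u|
  near : ∀ t u, |t - b t| ≤ |t - b u|

def sgnp (t : ℝ) : ℝ := if 0 ≤ t then 1 else -1

lemma sgnp_pm (t : ℝ) : sgnp t = 1 ∨ sgnp t = -1 := by
  unfold sgnp; split_ifs <;> simp

/-- greedy centers -/
def cc (b : ℝ → ℝ) (s : ℕ → ℝ) (t : ℝ) : ℕ → ℝ
  | 0 => b t
  | k + 1 => cc b s t k + 2⁻¹ * (s k * sgnp (t - cc b s t k))

/-- center of an address -/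
def zz (s : ℕ → ℝ) (p : ℝ) (σ : ℕ → ℝ) (k : ℕ) : ℝ :=
  p + 2⁻¹ * ∑ j ∈ Finset.range k, s j * σ j

lemma zz_zero (s : ℕ → ℝ) (p : ℝ) (σ : ℕ → ℝ) : zz s p σ 0 = p := by simp [zz]

lemma zz_succ (s : ℕ → ℝ) (p : ℝ) (σ : ℕ → ℝ) (k : ℕ) :
    zz s p σ (k + 1) = zz s p σ k + 2⁻¹ * (s k * σ k) := by
  simp [zz, Finset.sum_range_succ]; ring

lemma cc_eq_zz (b : ℝ → ℝ) (s : ℕ → ℝ) (t : ℝ) (k : ℕ) :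
    cc b s t k = zz s (b t) (fun j => sgnp (t - cc b s t j)) k := by
  induction k with
  | zero => simp [cc, zz]
  | succ k ih => rw [zz_succ, ← ih]; rfl

def dd (b : ℝ → ℝ) (s : ℕ → ℝ) (t : ℝ) (k : ℕ) : ℝ := |t - cc b s t k|

lemma dd_succ {s : ℕ → ℝ} (b : ℝ → ℝ) (t : ℝ) (k : ℕ) :
    dd b s t (k + 1) = |dd b s t k - s k / 2| := by
  simp only [dd, cc]
  unfold sgnp
  split_ifs with h
  · rw [abs_of_nonneg h]; congr 1; ring
  · rw [abs_of_neg (not_le.mp h), ← abs_neg]; congr 1; ring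

lemma dd_lip {b : ℝ → ℝ} (hb : Base b) (s : ℕ → ℝ) (t u : ℝ) (k : ℕ) :
    |dd b s t k - dd b s u k| ≤ |t - u| := by
  induction k with
  | zero =>
    simp only [dd, cc]
    have h1 := hb.near t u
    have h2 := hb.near u t
    have h3 : |t - b u| ≤ |t - u| + |u - b u| := by
      have := abs_add_le (t - u) (u - b u); simpa using this
    have h4 : |u - b t| ≤ |t - u| + |t - b t| := by
      have := abs_add_le (u - t) (t - b t); rw [abs_sub_comm u t] at this; simpa using this
    rw [abs_le]; constructor <;> linarith
  | succ k ih =>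
    rw [dd_succ, dd_succ]
    refine (abs_abs_sub_abs_le_abs_sub _ _).trans ?_
    simpa using ih

lemma dd_lt_of_succ {s : ℕ → ℝ} (b : ℝ → ℝ) {t : ℝ} {k : ℕ}
    (h : dd b s t (k + 1) < s k / 2) : dd b s t k < s k := by
  rw [dd_succ, abs_lt] at h; linarith

lemma dd_succ_le {s : ℕ → ℝ} (b : ℝ → ℝ) {t : ℝ} {k : ℕ}
    (h : dd b s t k ≤ s k) : dd b s t (k + 1) ≤ s k / 2 := by
  rw [dd_succ, abs_le]
  have : 0 ≤ dd b s t k := abs_nonneg _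
  constructor <;> linarith

lemma pm_abs_sub {s x y : ℝ} (hs : 0 ≤ s) (hx : x = 1 ∨ x = -1) (hy : y = 1 ∨ y = -1) :
    |2⁻¹ * (s * x) - 2⁻¹ * (s * y)| ≤ s := by
  rcases hx with rfl | rfl <;> rcases hy with rfl | rfl <;> rw [abs_le] <;> constructor <;> linarith

lemma zz_sep {b : ℝ → ℝ} (hb : Base b) {s : ℕ → ℝ} (hs : Scale s) {p p' : ℝ}
    (hp : p ∈ range b) (hp' : p' ∈ range b) {σ σ' : ℕ → ℝ}
    (hσ : ∀ j, σ j = 1 ∨ σ j = -1) (hσ' : ∀ j, σ' j = 1 ∨ σ' j = -1) (k : ℕ) :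
    (zz s p σ k ≠ zz s p' σ' k → 2 * s k ≤ |zz s p σ k - zz s p' σ' k|) ∧
    (zz s p σ (k + 1) ≠ zz s p' σ' (k + 1) →
      s k ≤ |zz s p σ (k + 1) - zz s p' σ' (k + 1)|) := by
  have step : ∀ k, (zz s p σ k ≠ zz s p' σ' k → 2 * s k ≤ |zz s p σ k - zz s p' σ' k|) →
    (zz s p σ (k + 1) ≠ zz s p' σ' (k + 1) →
      s k ≤ |zz s p σ (k + 1) - zz s p' σ' (k + 1)|) := by
    intro k h hne
    have hk := hs.pos k
    by_cases he : zz s p σ k = zz s p' σ' k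
    · rw [zz_succ, zz_succ, he] at hne ⊢
      rcases hσ k with h1 | h1 <;> rcases hσ' k with h2 | h2 <;> rw [h1, h2] at hne ⊢
      · simp at hne
      · refine le_trans (le_of_eq ?_) (le_abs_self _); ring
      · refine le_trans (le_of_eq ?_) (neg_le_abs _); ring
      · simp at hne
    · have h2 := h he
      rw [zz_succ, zz_succ]
      have h3 := pm_abs_sub hk.le (hσ k) (hσ' k)
      have h4 : |zz s p σ k - zz s p' σ' k| ≤
          |zz s p σ k + 2⁻¹ * (s k * σ k) - (zz s p' σ' k + 2⁻¹ * (s k * σ' k))| +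
          |2⁻¹ * (s k * σ k) - 2⁻¹ * (s k * σ' k)| := by
        refine le_trans (le_of_eq ?_) (abs_sub _ _)
        congr 1; ring
      linarith
  have main : ∀ k, zz s p σ k ≠ zz s p' σ' k → 2 * s k ≤ |zz s p σ k - zz s p' σ' k| := by
    intro k
    induction k with
    | zero =>
      rw [zz_zero, zz_zero, hs.zero]
      obtain ⟨t, rfl⟩ := hp
      obtain ⟨u, rfl⟩ := hp'
      intro h; simpa using hb.sep t u h
    | succ k ih =>
      intro h
      exact (hs.lt k).le.trans (step k ih h)
  exact ⟨main k, step k (main k)⟩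

/-- bound for the distance to the level-`k` centre: `s (k-1) / 2`, or `1` for `k = 0` -/
lemma dd_eq {b : ℝ → ℝ} (hb : Base b) {s : ℕ → ℝ} (hs : Scale s) {p : ℝ}
    (hp : p ∈ range b) {σ : ℕ → ℝ} (hσ : ∀ j, σ j = 1 ∨ σ j = -1) (t : ℝ) (k : ℕ) :
    (|t - zz s p σ k| ≤ s k → dd b s t k = |t - zz s p σ k|) ∧
    (|t - zz s p σ (k + 1)| ≤ s k / 2 → dd b s t (k + 1) = |t - zz s p σ (k + 1)|) := by
  have step : ∀ k, (|t - zz s p σ k| ≤ s k → dd b s t k = |t - zz s p σ k|) →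
      (|t - zz s p σ (k + 1)| ≤ s k / 2 → dd b s t (k + 1) = |t - zz s p σ (k + 1)|) := by
    intro k ih h
    have hk := hs.pos k
    rw [zz_succ] at h ⊢
    rcases hσ k with h1 | h1 <;> rw [h1] at h ⊢ <;> rw [abs_le] at h
    · have h0 : 0 ≤ t - zz s p σ k := by linarith
      rw [dd_succ, ih (by rw [abs_of_nonneg h0]; linarith), abs_of_nonneg h0]
      congr 1; ring
    · have h0 : t - zz s p σ k ≤ 0 := by linarith
      rw [dd_succ, ih (by rw [abs_of_nonpos h0]; linarith), abs_of_nonpos h0, ← abs_neg]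
      congr 1; ring
  have main : ∀ k, (|t - zz s p σ k| ≤ s k → dd b s t k = |t - zz s p σ k|) := by
    intro k
    induction k with
    | zero =>
      rw [zz_zero, hs.zero]
      obtain ⟨u, rfl⟩ := hp
      intro h
      simp only [dd, cc]
      have h1 := hb.near t u
      by_cases he : b t = b u
      · rw [he]
      · have h2 := hb.sep t u he
        have h3 : |b t - b u| ≤ |t - b u| + |t - b t| := by
          refine le_trans (le_of_eq ?_) (abs_sub (t - b u) (t - b t)); congr 1; ring
        linarith
    | succ k ih =>
      intro h
      exact step k ih (h.trans (by have := hs.lt k; linarith))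
  exact ⟨main k, step k (main k)⟩

/-- distance between centers of the same address at different levels -/
lemma zz_dist {s : ℕ → ℝ} (hs : Scale s) (p : ℝ) {σ : ℕ → ℝ}
    (hσ : ∀ j, σ j = 1 ∨ σ j = -1) (k n : ℕ) :
    |zz s p σ (k + n) - zz s p σ k| ≤ s k - s (k + n) := by
  induction n with
  | zero => simp
  | succ n ih =>
    rw [← add_assoc, zz_succ]
    have h1 := hs.pos (k + n)
    have h2 := hs.lt (k + n)
    rcases hσ (k + n) with h | h <;> rw [h] <;> rw [abs_le] at ih ⊢ <;> constructor <;> linarith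

lemma Scale.le_pow {s : ℕ → ℝ} (hs : Scale s) (k : ℕ) : s k ≤ (1 / 2 : ℝ) ^ k := by
  induction k with
  | zero => simp [hs.zero]
  | succ k ih => rw [pow_succ]; have := hs.lt k; linarith

lemma Scale.tendsto {s : ℕ → ℝ} (hs : Scale s) : Tendsto s atTop (nhds 0) :=
  squeeze_zero (fun k => (hs.pos k).le) hs.le_pow
    (tendsto_pow_atTop_nhds_zero_of_lt_one (by norm_num) (by norm_num))

/-! ### Vector-valued construction -/

abbrev X4 : Type := Fin 4 → ℝ

def cv (b : Fin 4 → ℝ → ℝ) (s : ℕ → ℝ) (x : X4) (k : ℕ) : X4 := fun i => cc (b i) s (x i) k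

def rho (b : Fin 4 → ℝ → ℝ) (s : ℕ → ℝ) (x : X4) (k : ℕ) : ℝ := ‖x - cv b s x k‖

def zv (s : ℕ → ℝ) (p : X4) (σ : Fin 4 → ℕ → ℝ) (k : ℕ) : X4 := fun i => zz s (p i) (σ i) k

structure Adm (b : Fin 4 → ℝ → ℝ) (p : X4) (σ : Fin 4 → ℕ → ℝ) : Prop where
  mem : ∀ i, p i ∈ range (b i)
  pm : ∀ i j, σ i j = 1 ∨ σ i j = -1

def gp (b : Fin 4 → ℝ → ℝ) (x : X4) : X4 := fun i => b i (x i)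
def gs (b : Fin 4 → ℝ → ℝ) (s : ℕ → ℝ) (x : X4) : Fin 4 → ℕ → ℝ :=
  fun i j => sgnp (x i - cc (b i) s (x i) j)

lemma adm_greedy (b : Fin 4 → ℝ → ℝ) (s : ℕ → ℝ) (x : X4) : Adm b (gp b x) (gs b s x) :=
  ⟨fun _ => ⟨_, rfl⟩, fun _ _ => sgnp_pm _⟩

lemma cv_eq_zv (b : Fin 4 → ℝ → ℝ) (s : ℕ → ℝ) (x : X4) (k : ℕ) :
    cv b s x k = zv s (gp b x) (gs b s x) k := by
  funext i; exact cc_eq_zz _ _ _ _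

lemma rho_le_iff {b : Fin 4 → ℝ → ℝ} {s : ℕ → ℝ} {x : X4} {k : ℕ} {r : ℝ} (hr : 0 ≤ r) :
    rho b s x k ≤ r ↔ ∀ i, dd (b i) s (x i) k ≤ r := by
  unfold rho; rw [pi_norm_le_iff_of_nonneg hr]; rfl

lemma rho_lt_iff {b : Fin 4 → ℝ → ℝ} {s : ℕ → ℝ} {x : X4} {k : ℕ} {r : ℝ} (hr : 0 < r) :
    rho b s x k < r ↔ ∀ i, dd (b i) s (x i) k < r := by
  unfold rho; rw [pi_norm_lt_iff hr]; rfl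

lemma rho_nonneg (b : Fin 4 → ℝ → ℝ) (s : ℕ → ℝ) (x : X4) (k : ℕ) : 0 ≤ rho b s x k :=
  norm_nonneg _

lemma dd_le_rho (b : Fin 4 → ℝ → ℝ) (s : ℕ → ℝ) (x : X4) (k : ℕ) (i : Fin 4) :
    dd (b i) s (x i) k ≤ rho b s x k := (rho_le_iff (rho_nonneg b s x k)).1 le_rfl i

lemma rho_lip' {b : Fin 4 → ℝ → ℝ} (hb : ∀ i, Base (b i)) (s : ℕ → ℝ) (x y : X4) (k : ℕ) :
    rho b s x k ≤ rho b s y k + ‖x - y‖ := by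
  rw [rho_le_iff (add_nonneg (rho_nonneg _ _ _ _) (norm_nonneg _))]
  intro i
  have h1 := dd_lip (hb i) s (x i) (y i) k
  have h2 := dd_le_rho b s y k i
  have h3 : |x i - y i| ≤ ‖x - y‖ := norm_le_pi_norm (x - y) i
  have := (abs_le.1 h1).2
  linarith

lemma rho_lip {b : Fin 4 → ℝ → ℝ} (hb : ∀ i, Base (b i)) (s : ℕ → ℝ) (x y : X4) (k : ℕ) :
    |rho b s x k - rho b s y k| ≤ ‖x - y‖ := by
  have h1 := rho_lip' hb s x y k
  have h2 := rho_lip' hb s y x k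
  rw [norm_sub_rev] at h2
  rw [abs_le]; constructor <;> linarith

lemma rho_continuous {b : Fin 4 → ℝ → ℝ} (hb : ∀ i, Base (b i)) (s : ℕ → ℝ) (k : ℕ) :
    Continuous (fun x => rho b s x k) := by
  refine (LipschitzWith.of_dist_le_mul (K := 1) fun x y => ?_).continuous
  rw [Real.dist_eq, dist_eq_norm]; simpa using rho_lip hb s x y k

lemma rho_lt_of_succ {b : Fin 4 → ℝ → ℝ} {s : ℕ → ℝ} (hs : Scale s) {x : X4} {k : ℕ}
    (h : rho b s x (k + 1) < s k / 2) : rho b s x k < s k := by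
  have := hs.pos k
  rw [rho_lt_iff (by linarith)] at h ⊢
  exact fun i => dd_lt_of_succ _ (h i)

lemma rho_succ_le {b : Fin 4 → ℝ → ℝ} {s : ℕ → ℝ} (hs : Scale s) {x : X4} {k : ℕ}
    (h : rho b s x k ≤ s k) : rho b s x (k + 1) ≤ s k / 2 := by
  have := hs.pos k
  rw [rho_le_iff (by linarith)] at h ⊢
  exact fun i => dd_succ_le _ (h i)

lemma rho_gt_mono {b : Fin 4 → ℝ → ℝ} {s : ℕ → ℝ} (hs : Scale s) {x : X4} {k : ℕ}
    (h : s k < rho b s x k) (n : ℕ) : s (k + n) < rho b s x (k + n) := by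
  induction n with
  | zero => exact h
  | succ n ih =>
    by_contra hc
    have := rho_lt_of_succ (b := b) hs (x := x) (k := k + n)
      (lt_of_le_of_lt (not_lt.1 hc) (by have := hs.lt (k + n); rw [← add_assoc]; linarith))
    linarith

/-- the radial coefficient -/
def qq (A0 A1 B0 B1 r : ℝ) : ℝ :=
  (B1 * A0 - B0 * A1) / (A0 - A1) * ((max A1 (min r A0))⁻¹ - A0⁻¹)

lemma qq_zero {A0 A1 B0 B1 r : ℝ} (h : A1 < A0) (hr : A0 ≤ r) : qq A0 A1 B0 B1 r = 0 := by
  unfold qq; rw [min_eq_right hr, max_eq_right h.le]; simp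

/-- `P_k` multiplier -/
def mu (A0 A1 B0 B1 r : ℝ) : ℝ := qq A0 A1 B0 B1 r + B0 / A0

lemma mu_inner {A0 A1 B0 B1 r : ℝ} (h1 : 0 < A1) (h : A1 < A0) (hr : r ≤ A1) :
    mu A0 A1 B0 B1 r = B1 / A1 := by
  unfold mu qq
  rw [min_eq_left (hr.trans h.le), max_eq_left hr]
  have h2 : A0 - A1 ≠ 0 := by linarith
  have h3 : A0 ≠ 0 := by linarith
  field_simp; ring

lemma mu_outer {A0 A1 B0 B1 r : ℝ} (h1 : 0 < A1) (h : A1 < A0) (hr : A1 ≤ r) (hr' : r ≤ A0) :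
    mu A0 A1 B0 B1 r * r = B1 + (B0 - B1) / (A0 - A1) * (r - A1) := by
  unfold mu qq
  rw [min_eq_left hr', max_eq_right hr]
  have h2 : A0 - A1 ≠ 0 := by linarith
  have h3 : A0 ≠ 0 := by linarith
  have h4 : r ≠ 0 := by linarith
  field_simp; ring

/-- Basic Lipschitz estimate in one cell, for `g = clamp⁻¹ - A0⁻¹`. -/
lemma cell_lip {A0 A1 : ℝ} (h1 : 0 < A1) (h : A1 < A0) (y y' : X4) :
    ‖((max A1 (min ‖y‖ A0))⁻¹ - A0⁻¹) • y - ((max A1 (min ‖y'‖ A0))⁻¹ - A0⁻¹) • y'‖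
      ≤ 2 / A1 * ‖y - y'‖ := by
  have key : ∀ y y' : X4, ‖y'‖ ≤ A0 →
      ‖((max A1 (min ‖y‖ A0))⁻¹ - A0⁻¹) • y - ((max A1 (min ‖y'‖ A0))⁻¹ - A0⁻¹) • y'‖
      ≤ 2 / A1 * ‖y - y'‖ := by
    intro y y' hy'
    set c := max A1 (min ‖y‖ A0) with hc
    set c' := max A1 (min ‖y'‖ A0) with hc'
    have hc1 : A1 ≤ c := le_max_left _ _
    have hc1' : A1 ≤ c' := le_max_left _ _
    have hcA : c ≤ A0 := max_le h.le (min_le_right _ _)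
    have hy'c : ‖y'‖ ≤ c' := by rw [hc', min_eq_left hy']; exact le_max_right _ _
    have hcc : |c' - c| ≤ ‖y - y'‖ := by
      calc |c' - c| ≤ |min ‖y'‖ A0 - min ‖y‖ A0| := by
            have := abs_max_sub_max_le_max A1 (min ‖y'‖ A0) A1 (min ‖y‖ A0)
            simpa using this
        _ ≤ |‖y'‖ - ‖y‖| := by
            have := abs_min_sub_min_le_max ‖y'‖ A0 ‖y‖ A0
            simpa using this
        _ ≤ ‖y' - y‖ := abs_norm_sub_norm_le _ _
        _ = _ := norm_sub_rev _ _
    have hcp : 0 < c := by linarith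
    have hcp' : 0 < c' := by linarith
    have e : (c⁻¹ - A0⁻¹) • y - (c'⁻¹ - A0⁻¹) • y' =
        (c⁻¹ - A0⁻¹) • (y - y') + (c⁻¹ - c'⁻¹) • y' := by module
    rw [e]
    refine (norm_add_le _ _).trans ?_
    rw [norm_smul, norm_smul]
    have hg : ‖c⁻¹ - A0⁻¹‖ ≤ 1 / A1 := by
      rw [Real.norm_eq_abs, abs_of_nonneg (sub_nonneg.2 (inv_anti₀ hcp hcA))]
      have : c⁻¹ ≤ A1⁻¹ := inv_anti₀ h1 hc1
      have : 0 < A0⁻¹ := inv_pos.2 (by linarith)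
      rw [one_div]; linarith
    have hg2 : ‖c⁻¹ - c'⁻¹‖ * ‖y'‖ ≤ 1 / A1 * ‖y - y'‖ := by
      have : c⁻¹ - c'⁻¹ = (c' - c) * (c⁻¹ * c'⁻¹) := by field_simp
      rw [this, Real.norm_eq_abs, abs_mul, abs_of_pos (by positivity : 0 < c⁻¹ * c'⁻¹)]
      have h5 : c'⁻¹ * ‖y'‖ ≤ 1 := by
        rw [inv_mul_le_iff₀ hcp']; linarith
      have h6 : c⁻¹ ≤ 1 / A1 := by rw [one_div]; exact inv_anti₀ h1 hc1
      calc |c' - c| * (c⁻¹ * c'⁻¹) * ‖y'‖ = |c' - c| * c⁻¹ * (c'⁻¹ * ‖y'‖) := by ring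
        _ ≤ |c' - c| * c⁻¹ * 1 := by gcongr
        _ ≤ ‖y - y'‖ * (1 / A1) * 1 := by gcongr
        _ = _ := by ring
    calc _ ≤ 1 / A1 * ‖y - y'‖ + 1 / A1 * ‖y - y'‖ := by gcongr
      _ = _ := by ring
  by_cases hy' : ‖y'‖ ≤ A0
  · exact key y y' hy'
  by_cases hy : ‖y‖ ≤ A0
  · rw [norm_sub_rev, norm_sub_rev y]; exact key y' y hy
  · rw [min_eq_right (not_le.1 hy').le, min_eq_right (not_le.1 hy).le, max_eq_right h.le]
    simp; positivity

lemma qq_bound {A0 A1 B0 B1 : ℝ} (h1 : 0 < A1) (h : A1 < A0) (r : ℝ) :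
    ‖qq A0 A1 B0 B1 r‖ * r ≤ |(B1 * A0 - B0 * A1) / (A0 - A1)| / A1 * max (A0 - r) 0 := by
  rcases le_total A0 r with h2 | h2
  · rw [qq_zero h h2]; simp; positivity
  · unfold qq
    rw [norm_mul, Real.norm_eq_abs, min_eq_left h2, max_eq_left (by linarith : 0 ≤ A0 - r),
      mul_assoc, div_eq_mul_inv _ A1, mul_assoc]
    refine mul_le_mul_of_nonneg_left ?_ (abs_nonneg _)
    set c := max A1 r with hc
    have hc1 : A1 ≤ c := le_max_left _ _
    have hrc : r ≤ c := le_max_right _ _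
    have hcA : c ≤ A0 := max_le h.le h2
    have hcp : 0 < c := by linarith
    have hA : 0 < A0 := by linarith
    rw [Real.norm_eq_abs, abs_of_nonneg (sub_nonneg.2 (inv_anti₀ hcp hcA))]
    have e : c⁻¹ - A0⁻¹ = (A0 - c) * (A0⁻¹ * c⁻¹) := by field_simp
    rw [e]
    have h5 : c⁻¹ * r ≤ 1 := by
      rw [inv_mul_le_iff₀ hcp]; linarith
    have h6 : A0⁻¹ ≤ A1⁻¹ := inv_anti₀ h1 h.le
    have h7 : 0 ≤ A0 - c := by linarith
    calc (A0 - c) * (A0⁻¹ * c⁻¹) * r = (A0 - c) * A0⁻¹ * (c⁻¹ * r) := by ring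
      _ ≤ (A0 - c) * A0⁻¹ * 1 := by gcongr
      _ ≤ (A0 - r) * A1⁻¹ * 1 := by gcongr
      _ = _ := by ring

def DD (b : Fin 4 → ℝ → ℝ) (s s' : ℕ → ℝ) (k : ℕ) (x : X4) : X4 :=
  qq (s k / 2) (s (k + 1)) (s' k / 2) (s' (k + 1)) (rho b s x (k + 1)) • (x - cv b s x (k + 1))

/-- Lipschitz constant of `DD k` -/
def kap (s s' : ℕ → ℝ) (k : ℕ) : ℝ :=
  |(s' (k + 1) * (s k / 2) - s' k / 2 * s (k + 1)) / (s k / 2 - s (k + 1))| * (2 / s (k + 1))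

lemma kap_nonneg {s : ℕ → ℝ} (hs : Scale s) (s' : ℕ → ℝ) (k : ℕ) : 0 ≤ kap s s' k :=
  mul_nonneg (abs_nonneg _) (div_nonneg (by norm_num) (hs.pos _).le)

lemma Scale.half {s : ℕ → ℝ} (hs : Scale s) (k : ℕ) : s (k + 1) < s k / 2 := by
  have := hs.lt k; linarith

lemma DD_zero {b : Fin 4 → ℝ → ℝ} {s : ℕ → ℝ} (hs : Scale s) (s' : ℕ → ℝ) {k : ℕ} {x : X4}
    (h : s k / 2 ≤ rho b s x (k + 1)) : DD b s s' k x = 0 := by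
  unfold DD; rw [qq_zero (hs.half k) h, zero_smul]

lemma DD_zero' {b : Fin 4 → ℝ → ℝ} {s : ℕ → ℝ} (hs : Scale s) (s' : ℕ → ℝ) {k : ℕ} {x : X4}
    (h : s k < rho b s x k) : DD b s s' k x = 0 := by
  refine DD_zero hs s' ?_
  by_contra hc
  have := rho_lt_of_succ hs (not_le.1 hc)
  linarith

lemma DD_bound {b : Fin 4 → ℝ → ℝ} {s : ℕ → ℝ} (hs : Scale s) (s' : ℕ → ℝ) (k : ℕ) (x : X4) :
    ‖DD b s s' k x‖ ≤ kap s s' k / 2 * max (s k / 2 - rho b s x (k + 1)) 0 := by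
  unfold DD
  rw [norm_smul]
  refine (qq_bound (hs.pos _) (hs.half k) _).trans (le_of_eq ?_)
  unfold kap; ring

lemma DD_lip {b : Fin 4 → ℝ → ℝ} (hb : ∀ i, Base (b i)) {s : ℕ → ℝ} (hs : Scale s) (s' : ℕ → ℝ)
    (k : ℕ) (x y : X4) : ‖DD b s s' k x - DD b s s' k y‖ ≤ kap s s' k * ‖x - y‖ := by
  have hk := kap_nonneg hs s' k
  by_cases hc : cv b s x (k + 1) = cv b s y (k + 1)
  · have h1 := cell_lip (hs.pos (k + 1)) (hs.half k) (x - cv b s x (k + 1)) (y - cv b s x (k + 1))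
    rw [sub_sub_sub_cancel_right] at h1
    unfold DD qq rho kap
    rw [← hc, mul_smul, mul_smul, ← smul_sub, norm_smul, Real.norm_eq_abs, mul_assoc]
    exact mul_le_mul_of_nonneg_left h1 (abs_nonneg _)
  · have hx := DD_bound (b := b) hs s' k x
    have hy := DD_bound (b := b) hs s' k y
    have hl := rho_lip hb s x y (k + 1)
    have key : max (s k / 2 - rho b s x (k + 1)) 0 + max (s k / 2 - rho b s y (k + 1)) 0
        ≤ 2 * ‖x - y‖ := by
      have hn := norm_nonneg (x - y)
      rw [abs_le] at hl
      rcases le_total (s k / 2 - rho b s x (k + 1)) 0 with h1 | h1 <;>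
      rcases le_total (s k / 2 - rho b s y (k + 1)) 0 with h2 | h2
      · rw [max_eq_right h1, max_eq_right h2]; linarith
      · rw [max_eq_right h1, max_eq_left h2]; linarith
      · rw [max_eq_left h1, max_eq_right h2]; linarith
      · rw [max_eq_left h1, max_eq_left h2]
        obtain ⟨i, hi⟩ := Function.ne_iff.1 hc
        have h3 : s k ≤ |cv b s x (k + 1) i - cv b s y (k + 1) i| := by
          have ax := adm_greedy b s x
          have ay := adm_greedy b s y
          rw [cv_eq_zv, cv_eq_zv] at hi ⊢
          exact (zz_sep (hb i) hs (ax.mem i) (ay.mem i) (ax.pm i) (ay.pm i) k).2 hi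
        have h4 := dd_le_rho b s x (k + 1) i
        have h5 := dd_le_rho b s y (k + 1) i
        have h6 : |x i - y i| ≤ ‖x - y‖ := norm_le_pi_norm (x - y) i
        have h7 : |cv b s x (k + 1) i - cv b s y (k + 1) i| ≤
            dd (b i) s (x i) (k + 1) + |x i - y i| + dd (b i) s (y i) (k + 1) := by
          unfold dd cv
          rw [abs_sub_comm (x i) (cc (b i) s (x i) (k + 1))]
          refine le_trans (le_of_eq ?_) (abs_add_three _ _ _)
          congr 1; ring
        linarith
    calc ‖DD b s s' k x - DD b s s' k y‖ ≤ ‖DD b s s' k x‖ + ‖DD b s s' k y‖ := norm_sub_le _ _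
      _ ≤ kap s s' k / 2 * (max (s k / 2 - rho b s x (k + 1)) 0 +
            max (s k / 2 - rho b s y (k + 1)) 0) := by linarith
      _ ≤ kap s s' k / 2 * (2 * ‖x - y‖) := by gcongr
      _ = _ := by ring

lemma DD_continuous {b : Fin 4 → ℝ → ℝ} (hb : ∀ i, Base (b i)) {s : ℕ → ℝ} (hs : Scale s)
    (s' : ℕ → ℝ) (k : ℕ) : Continuous (DD b s s' k) := by
  refine (LipschitzWith.of_dist_le_mul (K := ⟨kap s s' k, kap_nonneg hs s' k⟩)
    fun x y => ?_).continuous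
  rw [dist_eq_norm, dist_eq_norm]; exact DD_lip hb hs s' k x y

lemma mu_bounds {A0 A1 B0 B1 r : ℝ} (h1 : 0 < A1) (h : A1 < A0) (g1 : 0 < B1) (g : B1 < B0)
    (hr : 0 ≤ r) (hr' : r ≤ A0) : 0 ≤ mu A0 A1 B0 B1 r * r ∧ mu A0 A1 B0 B1 r * r ≤ B0 := by
  rcases le_total r A1 with h2 | h2
  · rw [mu_inner h1 h h2]
    refine ⟨by positivity, ?_⟩
    have : B1 / A1 * r ≤ B1 / A1 * A1 := by gcongr
    rw [div_mul_cancel₀ _ h1.ne'] at this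
    linarith
  · rw [mu_outer h1 h h2 hr']
    have e0 : 0 < A0 - A1 := by linarith
    have e1 : 0 ≤ (B0 - B1) / (A0 - A1) := div_nonneg (by linarith) e0.le
    refine ⟨by nlinarith [mul_nonneg e1 (sub_nonneg.2 h2)], ?_⟩
    have : (B0 - B1) / (A0 - A1) * (r - A1) ≤ (B0 - B1) / (A0 - A1) * (A0 - A1) := by gcongr
    rw [div_mul_cancel₀ _ e0.ne'] at this
    linarith

lemma DD_small {b : Fin 4 → ℝ → ℝ} {s s' : ℕ → ℝ} (hs : Scale s) (hs' : Scale s')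
    (k : ℕ) (x : X4) : ‖DD b s s' k x‖ ≤ (1 / 2 : ℝ) ^ k := by
  rcases le_total (s k / 2) (rho b s x (k + 1)) with h | h
  · rw [DD_zero hs s' h, norm_zero]; positivity
  · refine le_trans ?_ (hs'.le_pow k)
    have hk := hs.pos k
    have hk' := hs'.pos k
    obtain ⟨m1, m2⟩ := mu_bounds (hs.pos (k + 1)) (hs.half k) (hs'.pos (k + 1)) (hs'.half k)
      (rho_nonneg b s x (k + 1)) h
    unfold DD
    rw [norm_smul, Real.norm_eq_abs]
    change |_| * rho b s x (k + 1) ≤ _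
    rw [← abs_of_nonneg (rho_nonneg b s x (k + 1)), ← abs_mul,
      abs_of_nonneg (rho_nonneg b s x (k + 1))]
    unfold mu at m1 m2
    set q := qq (s k / 2) (s (k + 1)) (s' k / 2) (s' (k + 1)) (rho b s x (k + 1))
    have e : s' k / 2 / (s k / 2) * rho b s x (k + 1) ≤ s' k / 2 := by
      calc _ ≤ s' k / 2 / (s k / 2) * (s k / 2) := by gcongr
        _ = _ := by field_simp
    have e' : 0 ≤ s' k / 2 / (s k / 2) * rho b s x (k + 1) :=
      mul_nonneg (by positivity) (rho_nonneg _ _ _ _)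
    rw [abs_le]; constructor <;> linarith

lemma norm_zv_le {s : ℕ → ℝ} {p x : X4} {σ : Fin 4 → ℕ → ℝ} {k : ℕ} {r : ℝ}
    (h : ‖x - zv s p σ k‖ ≤ r) (i : Fin 4) : |x i - zz s (p i) (σ i) k| ≤ r :=
  (norm_le_pi_norm (x - zv s p σ k) i).trans h

lemma rho_eq_succ {b : Fin 4 → ℝ → ℝ} (hb : ∀ i, Base (b i)) {s : ℕ → ℝ} (hs : Scale s)
    {p : X4} {σ : Fin 4 → ℕ → ℝ} (ha : Adm b p σ) {x : X4} {k : ℕ}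
    (h : ‖x - zv s p σ (k + 1)‖ ≤ s k / 2) : rho b s x (k + 1) = ‖x - zv s p σ (k + 1)‖ := by
  have e : ∀ i, dd (b i) s (x i) (k + 1) = |x i - zz s (p i) (σ i) (k + 1)| := fun i =>
    (dd_eq (hb i) hs (ha.mem i) (ha.pm i) (x i) k).2 (norm_zv_le h i)
  refine le_antisymm ((rho_le_iff (norm_nonneg _)).2 fun i => ?_)
    ((pi_norm_le_iff_of_nonneg (rho_nonneg _ _ _ _)).2 fun i => ?_)
  · rw [e]; exact norm_zv_le le_rfl i
  · exact (e i).symm.le.trans (dd_le_rho b s x _ i)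

lemma rho_eq {b : Fin 4 → ℝ → ℝ} (hb : ∀ i, Base (b i)) {s : ℕ → ℝ} (hs : Scale s)
    {p : X4} {σ : Fin 4 → ℕ → ℝ} (ha : Adm b p σ) {x : X4} {k : ℕ}
    (h : ‖x - zv s p σ k‖ ≤ s k) : rho b s x k = ‖x - zv s p σ k‖ := by
  have e : ∀ i, dd (b i) s (x i) k = |x i - zz s (p i) (σ i) k| := fun i =>
    (dd_eq (hb i) hs (ha.mem i) (ha.pm i) (x i) k).1 (norm_zv_le h i)
  refine le_antisymm ((rho_le_iff (norm_nonneg _)).2 fun i => ?_)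
    ((pi_norm_le_iff_of_nonneg (rho_nonneg _ _ _ _)).2 fun i => ?_)
  · rw [e]; exact norm_zv_le le_rfl i
  · exact (e i).symm.le.trans (dd_le_rho b s x _ i)

lemma DD_eq {b : Fin 4 → ℝ → ℝ} (hb : ∀ i, Base (b i)) {s : ℕ → ℝ} (hs : Scale s) (s' : ℕ → ℝ)
    {p : X4} {σ : Fin 4 → ℕ → ℝ} (ha : Adm b p σ) {x : X4} {k : ℕ}
    (h : ‖x - zv s p σ (k + 1)‖ ≤ s k / 2) :
    DD b s s' k x = qq (s k / 2) (s (k + 1)) (s' k / 2) (s' (k + 1)) ‖x - zv s p σ (k + 1)‖ •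
      (x - zv s p σ (k + 1)) := by
  have e := rho_eq_succ hb hs ha h
  rcases h.lt_or_eq with h1 | h1
  · have hc : cv b s x (k + 1) = zv s p σ (k + 1) := by
      funext i
      by_contra hne
      have ax := adm_greedy b s x
      have h2 := norm_zv_le le_rfl i (x := x) (s := s) (p := p) (σ := σ) (k := k + 1)
      have h3 := dd_le_rho b s x (k + 1) i
      have h4 : dd (b i) s (x i) (k + 1) = |x i - cv b s x (k + 1) i| := rfl
      rw [cv_eq_zv] at hne h4
      have h5 := (zz_sep (hb i) hs (ax.mem i) (ha.mem i) (ax.pm i) (ha.pm i) k).2 hne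
      have h6 := abs_sub (x i - zz s (p i) (σ i) (k + 1))
        (x i - zz s (gp b x i) (gs b s x i) (k + 1))
      rw [sub_sub_sub_cancel_left] at h6
      change dd (b i) s (x i) (k + 1) = |x i - zz s (gp b x i) (gs b s x i) (k + 1)| at h4
      linarith
    unfold DD; rw [e, hc]
  · rw [DD_zero hs s' (by rw [e, h1]), h1, qq_zero (hs.half k) le_rfl, zero_smul]

def FF (b : Fin 4 → ℝ → ℝ) (s s' : ℕ → ℝ) (k : ℕ) (x : X4) : X4 :=
  x + ∑ j ∈ Finset.range k, DD b s s' j x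

def Fm (b : Fin 4 → ℝ → ℝ) (s s' : ℕ → ℝ) (x : X4) : X4 := x + ∑' j, DD b s s' j x

lemma zv_succ (s : ℕ → ℝ) (p : X4) (σ : Fin 4 → ℕ → ℝ) (k : ℕ) :
    zv s p σ (k + 1) = zv s p σ k + s k • ((2⁻¹ : ℝ) • fun i => σ i k) := by
  funext i; simp only [zv, zz_succ, Pi.add_apply, Pi.smul_apply, smul_eq_mul]; ring

lemma FF_formula {b : Fin 4 → ℝ → ℝ} (hb : ∀ i, Base (b i)) {s s' : ℕ → ℝ} (hs : Scale s)
    (hs' : Scale s') {p : X4} {σ : Fin 4 → ℕ → ℝ} (ha : Adm b p σ) (x : X4) (k : ℕ) :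
    (‖x - zv s p σ k‖ ≤ s k → FF b s s' k x = zv s' p σ k + (s' k / s k) • (x - zv s p σ k)) ∧
    (‖x - zv s p σ (k + 1)‖ ≤ s k / 2 → FF b s s' (k + 1) x = zv s' p σ (k + 1) +
      mu (s k / 2) (s (k + 1)) (s' k / 2) (s' (k + 1)) ‖x - zv s p σ (k + 1)‖ •
      (x - zv s p σ (k + 1))) := by
  have step : ∀ k, (‖x - zv s p σ k‖ ≤ s k →
      FF b s s' k x = zv s' p σ k + (s' k / s k) • (x - zv s p σ k)) →
      (‖x - zv s p σ (k + 1)‖ ≤ s k / 2 → FF b s s' (k + 1) x = zv s' p σ (k + 1) +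
      mu (s k / 2) (s (k + 1)) (s' k / 2) (s' (k + 1)) ‖x - zv s p σ (k + 1)‖ •
      (x - zv s p σ (k + 1))) := by
    intro k ih h
    have hk := hs.pos k
    have h0 : ‖x - zv s p σ k‖ ≤ s k := by
      rw [pi_norm_le_iff_of_nonneg hk.le]
      intro i
      have := norm_zv_le h i
      rw [zz_succ] at this
      change |x i - zz s (p i) (σ i) k| ≤ s k
      rcases ha.pm i k with h1 | h1 <;> rw [h1, abs_le] at this <;> rw [abs_le] <;>
        constructor <;> linarith
    have e : FF b s s' (k + 1) x = FF b s s' k x + DD b s s' k x := by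
      unfold FF; rw [Finset.sum_range_succ, add_assoc]
    rw [e, ih h0, DD_eq hb hs s' ha h]
    unfold mu
    generalize qq (s k / 2) (s (k + 1)) (s' k / 2) (s' (k + 1)) ‖x - zv s p σ (k + 1)‖ = q
    rw [zv_succ, zv_succ]
    have e2 : s' k / 2 / (s k / 2) = s' k / s k := by field_simp
    rw [e2]
    have e3 : s' k = s' k / s k * s k := by field_simp
    nth_rw 2 [e3]
    generalize s' k / s k = c
    module
  have main : ∀ k, ‖x - zv s p σ k‖ ≤ s k →
      FF b s s' k x = zv s' p σ k + (s' k / s k) • (x - zv s p σ k) := by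
    intro k
    induction k with
    | zero =>
      intro _
      have : ∀ s, zv s p σ 0 = p := fun s => by funext i; exact zz_zero _ _ _
      rw [this, this, hs.zero, hs'.zero]; simp [FF]
    | succ k ih =>
      intro h
      rw [step k ih (h.trans (hs.half k).le), mu_inner (hs.pos _) (hs.half k) h]
  exact ⟨main k, step k (main k)⟩

def CC (b : Fin 4 → ℝ → ℝ) (s : ℕ → ℝ) : Set X4 := {x | ∀ k, rho b s x k ≤ s k}

lemma not_mem_CC {b : Fin 4 → ℝ → ℝ} {s : ℕ → ℝ} {x : X4} :
    x ∉ CC b s ↔ ∃ k, s k < rho b s x k := by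
  simp [CC]

lemma summable_half : Summable (fun k : ℕ => (1 / 2 : ℝ) ^ k) :=
  summable_geometric_of_lt_one (by norm_num) (by norm_num)

lemma summable_DD (b : Fin 4 → ℝ → ℝ) {s s' : ℕ → ℝ} (hs : Scale s) (hs' : Scale s')
    (x : X4) : Summable (fun j => DD b s s' j x) :=
  Summable.of_norm_bounded summable_half (fun k => DD_small hs hs' k x)

lemma Fm_tendsto (b : Fin 4 → ℝ → ℝ) {s s' : ℕ → ℝ} (hs : Scale s) (hs' : Scale s')
    (x : X4) : Tendsto (fun k => FF b s s' k x) atTop (nhds (Fm b s s' x)) :=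
  (summable_DD b hs hs' x).hasSum.tendsto_sum_nat.const_add x

lemma Fm_continuous {b : Fin 4 → ℝ → ℝ} (hb : ∀ i, Base (b i)) {s s' : ℕ → ℝ} (hs : Scale s)
    (hs' : Scale s') : Continuous (Fm b s s') :=
  continuous_id.add (continuous_tsum (fun k => DD_continuous hb hs s' k) summable_half
    (fun k x => DD_small hs hs' k x))

lemma Fm_eq_FF {b : Fin 4 → ℝ → ℝ} {s : ℕ → ℝ} (hs : Scale s) (s' : ℕ → ℝ) {x : X4} {k : ℕ}
    (h : s k < rho b s x k) : Fm b s s' x = FF b s s' k x := by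
  unfold Fm FF
  rw [tsum_eq_sum]
  intro j hj
  obtain ⟨n, rfl⟩ := Nat.exists_eq_add_of_le (not_lt.1 (fun h => hj (Finset.mem_range.2 h)))
  exact DD_zero' hs s' (rho_gt_mono hs h n)

lemma FF_lip {b : Fin 4 → ℝ → ℝ} (hb : ∀ i, Base (b i)) {s : ℕ → ℝ} (hs : Scale s) (s' : ℕ → ℝ)
    (k : ℕ) (x y : X4) : ‖FF b s s' k x - FF b s s' k y‖ ≤
      (1 + ∑ j ∈ Finset.range k, kap s s' j) * ‖x - y‖ := by
  unfold FF
  rw [add_sub_add_comm, ← Finset.sum_sub_distrib, add_mul, one_mul, Finset.sum_mul]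
  refine (norm_add_le _ _).trans (add_le_add le_rfl ?_)
  exact (norm_sum_le _ _).trans (Finset.sum_le_sum fun j _ => DD_lip hb hs s' j x y)

lemma Fm_loclip {b : Fin 4 → ℝ → ℝ} (hb : ∀ i, Base (b i)) {s : ℕ → ℝ} (hs : Scale s)
    (s' : ℕ → ℝ) {x : X4} (hx : x ∉ CC b s) : ∃ U : Set X4, IsOpen U ∧ x ∈ U ∧ ∃ L : ℝ, 0 < L ∧
      ∀ y ∈ U, ∀ z ∈ U, ‖Fm b s s' y - Fm b s s' z‖ ≤ L * ‖y - z‖ := by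
  obtain ⟨k, hk⟩ := not_mem_CC.1 hx
  refine ⟨{y | s k < rho b s y k}, isOpen_lt continuous_const (rho_continuous hb s k), hk,
    1 + ∑ j ∈ Finset.range k, kap s s' j, ?_, ?_⟩
  · have := Finset.sum_nonneg (s := Finset.range k) (fun j _ => kap_nonneg hs s' j)
    linarith
  · intro y hy z hz
    rw [Fm_eq_FF hs s' hy, Fm_eq_FF hs s' hz]
    exact FF_lip hb hs s' k y z

lemma Fm_sub_FF_lip {b : Fin 4 → ℝ → ℝ} (hb : ∀ i, Base (b i)) {s s' : ℕ → ℝ} (hs : Scale s)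
    (hs' : Scale s') (hk : Summable (kap s s')) (k : ℕ) (x y : X4) :
    ‖(Fm b s s' x - FF b s s' k x) - (Fm b s s' y - FF b s s' k y)‖ ≤
      (∑' j, kap s s' (j + k)) * ‖x - y‖ := by
  have e : ∀ x, Fm b s s' x - FF b s s' k x = ∑' j, DD b s s' (j + k) x := by
    intro x
    unfold Fm FF
    rw [← (summable_DD b hs hs' x).sum_add_tsum_nat_add k]; abel
  have hsm : ∀ x, Summable fun j => DD b s s' (j + k) x := fun x =>
    (summable_nat_add_iff k).2 (summable_DD b hs hs' x)
  rw [e, e, ← (hsm x).tsum_sub (hsm y), ← tsum_mul_right]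
  exact tsum_of_norm_bounded (((summable_nat_add_iff k).2 hk).mul_right _).hasSum
    (fun j => DD_lip hb hs s' (j + k) x y)

lemma Fm_lip {b : Fin 4 → ℝ → ℝ} (hb : ∀ i, Base (b i)) {s s' : ℕ → ℝ} (hs : Scale s)
    (hs' : Scale s') (hk : Summable (kap s s')) (x y : X4) :
    ‖Fm b s s' x - Fm b s s' y‖ ≤ (1 + ∑' j, kap s s' j) * ‖x - y‖ := by
  have h := Fm_sub_FF_lip hb hs hs' hk 0 x y
  have e : ∀ x, FF b s s' 0 x = x := fun x => by simp [FF]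
  rw [e, e] at h
  simp only [add_zero] at h
  calc ‖Fm b s s' x - Fm b s s' y‖ = ‖(x - y) + ((Fm b s s' x - x) - (Fm b s s' y - y))‖ := by
        congr 1; abel
    _ ≤ ‖x - y‖ + (∑' j, kap s s' j) * ‖x - y‖ := (norm_add_le _ _).trans (by gcongr)
    _ = _ := by ring

lemma zv_dist {s : ℕ → ℝ} (hs : Scale s) {b : Fin 4 → ℝ → ℝ} {p : X4} {σ : Fin 4 → ℕ → ℝ}
    (ha : Adm b p σ) (k n : ℕ) : ‖zv s p σ (k + n) - zv s p σ k‖ ≤ s k - s (k + n) := by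
  have h0 : 0 ≤ s k - s (k + n) := (abs_nonneg _).trans (zz_dist hs (p 0) (ha.pm 0) k n)
  rw [pi_norm_le_iff_of_nonneg h0]
  exact fun i => zz_dist hs (p i) (ha.pm i) k n

lemma mem_CC_of {b : Fin 4 → ℝ → ℝ} (hb : ∀ i, Base (b i)) {s : ℕ → ℝ} (hs : Scale s) {p : X4}
    {σ : Fin 4 → ℕ → ℝ} (ha : Adm b p σ) {x : X4} (hx : ∀ k, ‖x - zv s p σ k‖ ≤ s k) :
    x ∈ CC b s := fun k => by rw [rho_eq hb hs ha (hx k)]; exact hx k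

lemma mem_CC_greedy {b : Fin 4 → ℝ → ℝ} {s : ℕ → ℝ} {x : X4} (hx : x ∈ CC b s) (k : ℕ) :
    ‖x - zv s (gp b x) (gs b s x) k‖ ≤ s k := by
  rw [← cv_eq_zv]; exact hx k

lemma Fm_addr {b : Fin 4 → ℝ → ℝ} (hb : ∀ i, Base (b i)) {s s' : ℕ → ℝ} (hs : Scale s)
    (hs' : Scale s') {p : X4} {σ : Fin 4 → ℕ → ℝ} (ha : Adm b p σ) {x : X4}
    (hx : ∀ k, ‖x - zv s p σ k‖ ≤ s k) (k : ℕ) : ‖Fm b s s' x - zv s' p σ k‖ ≤ s' k := by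
  have h1 : ∀ j, ‖FF b s s' j x - zv s' p σ j‖ ≤ s' j := by
    intro j
    rw [(FF_formula hb hs hs' ha x j).1 (hx j), add_sub_cancel_left, norm_smul, Real.norm_eq_abs,
      abs_of_pos (div_pos (hs'.pos j) (hs.pos j))]
    have := hs.pos j
    have := hs'.pos j
    calc s' j / s j * ‖x - zv s p σ j‖ ≤ s' j / s j * s j := by gcongr; exact hx j
      _ = _ := by field_simp
  have h2 : Tendsto (fun n => ‖FF b s s' (k + n) x - zv s' p σ k‖) atTop
      (nhds ‖Fm b s s' x - zv s' p σ k‖) := by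
    refine (Tendsto.sub_const ?_ _).norm
    have := (tendsto_add_atTop_iff_nat k).2 (Fm_tendsto b hs hs' x)
    simpa only [add_comm] using this
  refine le_of_tendsto' h2 fun n => ?_
  have h3 := norm_add_le (FF b s s' (k + n) x - zv s' p σ (k + n))
    (zv s' p σ (k + n) - zv s' p σ k)
  rw [sub_add_sub_cancel] at h3
  have := h1 (k + n)
  have := zv_dist hs' ha k n
  linarith

lemma eq_of_addr {s : ℕ → ℝ} (hs : Scale s) {p : X4} {σ : Fin 4 → ℕ → ℝ} {x y : X4}
    (hx : ∀ k, ‖x - zv s p σ k‖ ≤ s k) (hy : ∀ k, ‖y - zv s p σ k‖ ≤ s k) : x = y := by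
  have h : ∀ k, ‖x - y‖ ≤ 2 * s k := by
    intro k
    have := norm_sub_le (x - zv s p σ k) (y - zv s p σ k)
    rw [sub_sub_sub_cancel_right] at this
    linarith [hx k, hy k]
  have h2 : ‖x - y‖ ≤ 2 * 0 := ge_of_tendsto' (hs.tendsto.const_mul 2) h
  rw [mul_zero] at h2
  exact sub_eq_zero.1 (norm_le_zero_iff.1 h2)

/-- the frame case -/
lemma Fm_frame {b : Fin 4 → ℝ → ℝ} (hb : ∀ i, Base (b i)) {s s' : ℕ → ℝ} (hs : Scale s)
    (hs' : Scale s') {p : X4} {σ : Fin 4 → ℕ → ℝ} (ha : Adm b p σ) {x : X4} {k : ℕ}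
    (h1 : s (k + 1) < ‖x - zv s p σ (k + 1)‖) (h2 : ‖x - zv s p σ (k + 1)‖ ≤ s k / 2) :
    Fm b s s' x = zv s' p σ (k + 1) +
      mu (s k / 2) (s (k + 1)) (s' k / 2) (s' (k + 1)) ‖x - zv s p σ (k + 1)‖ •
      (x - zv s p σ (k + 1)) := by
  rw [Fm_eq_FF hs s' (k := k + 1) (by rw [rho_eq_succ hb hs ha h2]; exact h1)]
  exact (FF_formula hb hs hs' ha x k).2 h2

lemma cases_frame {b : Fin 4 → ℝ → ℝ} {s : ℕ → ℝ} (hs : Scale s) (x : X4) :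
    x ∈ CC b s ∨ s 0 < rho b s x 0 ∨ ∃ k,
      s (k + 1) < ‖x - zv s (gp b x) (gs b s x) (k + 1)‖ ∧
      ‖x - zv s (gp b x) (gs b s x) (k + 1)‖ ≤ s k / 2 := by
  by_cases hx : x ∈ CC b s
  · exact Or.inl hx
  right
  classical
  have hex := not_mem_CC.1 hx
  rcases h : Nat.find hex with _ | k
  · left; have := Nat.find_spec hex; rwa [h] at this
  · right
    refine ⟨k, ?_, ?_⟩
    · have := Nat.find_spec hex; rw [h] at this; rw [← cv_eq_zv]; exact this
    · rw [← cv_eq_zv]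
      exact rho_succ_le hs (not_lt.1 (Nat.find_min hex (m := k) (by omega)))

lemma frame_norm {s s' : ℕ → ℝ} (hs : Scale s)
    (hs' : Scale s') {v : X4} {k : ℕ} (h1 : s (k + 1) < ‖v‖) (h2 : ‖v‖ ≤ s k / 2) :
    ‖mu (s k / 2) (s (k + 1)) (s' k / 2) (s' (k + 1)) ‖v‖ • v‖ =
      s' (k + 1) + (s' k / 2 - s' (k + 1)) / (s k / 2 - s (k + 1)) * (‖v‖ - s (k + 1)) := by
  have hv : 0 < ‖v‖ := (hs.pos _).trans h1
  have e := mu_outer (B0 := s' k / 2) (B1 := s' (k + 1)) (hs.pos (k + 1)) (hs.half k) h1.le h2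
  have b := (mu_bounds (hs.pos (k + 1)) (hs.half k) (hs'.pos (k + 1)) (hs'.half k) hv.le h2).1
  rw [norm_smul, ← e, Real.norm_eq_abs, abs_of_nonneg (nonneg_of_mul_nonneg_left b hv)]

lemma frame_range {s s' : ℕ → ℝ} (hs : Scale s)
    (hs' : Scale s') {v : X4} {k : ℕ} (h1 : s (k + 1) < ‖v‖) (h2 : ‖v‖ ≤ s k / 2) :
    s' (k + 1) < ‖mu (s k / 2) (s (k + 1)) (s' k / 2) (s' (k + 1)) ‖v‖ • v‖ ∧
    ‖mu (s k / 2) (s (k + 1)) (s' k / 2) (s' (k + 1)) ‖v‖ • v‖ ≤ s' k / 2 := by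
  have hv : 0 < ‖v‖ := (hs.pos _).trans h1
  constructor
  · rw [frame_norm hs hs' h1 h2]
    have : 0 < (s' k / 2 - s' (k + 1)) / (s k / 2 - s (k + 1)) * (‖v‖ - s (k + 1)) :=
      mul_pos (div_pos (sub_pos.2 (hs'.half k)) (sub_pos.2 (hs.half k))) (sub_pos.2 h1)
    linarith
  · rw [frame_norm hs hs' h1 h2, ← mu_outer (hs.pos (k + 1)) (hs.half k) h1.le h2]
    exact (mu_bounds (hs.pos (k + 1)) (hs.half k) (hs'.pos (k + 1)) (hs'.half k) hv.le h2).2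

lemma frame_inv {s s' : ℕ → ℝ} (hs : Scale s)
    (hs' : Scale s') {v : X4} {k : ℕ} (h1 : s (k + 1) < ‖v‖) (h2 : ‖v‖ ≤ s k / 2) :
    mu (s' k / 2) (s' (k + 1)) (s k / 2) (s (k + 1))
      ‖mu (s k / 2) (s (k + 1)) (s' k / 2) (s' (k + 1)) ‖v‖ • v‖ •
      mu (s k / 2) (s (k + 1)) (s' k / 2) (s' (k + 1)) ‖v‖ • v = v := by
  have hv : 0 < ‖v‖ := (hs.pos _).trans h1
  obtain ⟨r1, r2⟩ := frame_range hs hs' h1 h2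
  have e := frame_norm hs hs' h1 h2
  have e1 := mu_outer (B0 := s' k / 2) (B1 := s' (k + 1)) (hs.pos (k + 1)) (hs.half k) h1.le h2
  have e2 := mu_outer (B0 := s k / 2) (B1 := s (k + 1)) (hs'.pos (k + 1)) (hs'.half k) r1.le r2
  have hp := (hs'.pos (k + 1)).trans r1
  generalize ‖mu (s k / 2) (s (k + 1)) (s' k / 2) (s' (k + 1)) ‖v‖ • v‖ = R at *
  generalize mu (s' k / 2) (s' (k + 1)) (s k / 2) (s (k + 1)) R = M' at *
  generalize mu (s k / 2) (s (k + 1)) (s' k / 2) (s' (k + 1)) ‖v‖ = M at *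
  rw [← e] at e1
  have d1 := sub_pos.2 (hs.half k)
  have d2 := sub_pos.2 (hs'.half k)
  have e3 : M' * R = ‖v‖ := by
    rw [e2, e]
    generalize s k / 2 - s (k + 1) = a at *
    generalize s' k / 2 - s' (k + 1) = c at *
    field_simp; ring
  rw [smul_smul]
  have : M' * M = 1 := by
    have : M' * M * ‖v‖ = 1 * ‖v‖ := by rw [mul_assoc, e1, e3, one_mul]
    exact mul_right_cancel₀ hv.ne' this
  rw [this, one_smul]

lemma rho_zero (b : Fin 4 → ℝ → ℝ) (s s' : ℕ → ℝ) (x : X4) : rho b s x 0 = rho b s' x 0 := rfl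

lemma Fm_outside {b : Fin 4 → ℝ → ℝ} {s : ℕ → ℝ} (hs : Scale s) (s' : ℕ → ℝ) {x : X4}
    (h : s 0 < rho b s x 0) : Fm b s s' x = x := by
  rw [Fm_eq_FF hs s' h]; simp [FF]

lemma Fm_inv {b : Fin 4 → ℝ → ℝ} (hb : ∀ i, Base (b i)) {s s' : ℕ → ℝ} (hs : Scale s)
    (hs' : Scale s') (x : X4) : Fm b s' s (Fm b s s' x) = x := by
  have ha := adm_greedy b s x
  rcases cases_frame (b := b) hs x with h | h | ⟨k, h1, h2⟩
  · have hx := mem_CC_greedy h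
    exact eq_of_addr hs (Fm_addr hb hs' hs ha (Fm_addr hb hs hs' ha hx)) hx
  · rw [Fm_outside hs s' h, Fm_outside hs' s]
    rw [hs'.zero, ← hs.zero]; exact h
  · rw [Fm_frame hb hs hs' ha h1 h2]
    obtain ⟨r1, r2⟩ := frame_range hs hs' h1 h2
    rw [Fm_frame hb hs' hs ha (k := k) (by rw [add_sub_cancel_left]; exact r1)
      (by rw [add_sub_cancel_left]; exact r2), add_sub_cancel_left, frame_inv hs hs' h1 h2]
    abel

lemma Fm_mem_CC {b : Fin 4 → ℝ → ℝ} (hb : ∀ i, Base (b i)) {s s' : ℕ → ℝ} (hs : Scale s)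
    (hs' : Scale s') {x : X4} (hx : x ∈ CC b s) : Fm b s s' x ∈ CC b s' :=
  mem_CC_of hb hs' (adm_greedy b s x) (Fm_addr hb hs hs' (adm_greedy b s x) (mem_CC_greedy hx))

lemma Fm_range {b : Fin 4 → ℝ → ℝ} (hb : ∀ i, Base (b i)) {s s' : ℕ → ℝ} (hs : Scale s)
    (hs' : Scale s') (x : X4) :
    Fm b s s' x = x ∨ ∃ p : X4, (∀ i, p i ∈ range (b i)) ∧ ‖Fm b s s' x - p‖ ≤ 1 := by
  have ha := adm_greedy b s x
  have hz : zv s' (gp b x) (gs b s x) 0 = gp b x := by funext i; exact zz_zero _ _ _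
  rcases cases_frame (b := b) hs x with h | h | ⟨k, h1, h2⟩
  · right
    refine ⟨gp b x, ha.mem, ?_⟩
    have := Fm_addr hb hs hs' ha (mem_CC_greedy h) 0
    rwa [hz, hs'.zero] at this
  · left; exact Fm_outside hs s' h
  · right
    refine ⟨gp b x, ha.mem, ?_⟩
    rw [Fm_frame hb hs hs' ha h1 h2]
    have r2 := (frame_range hs hs' h1 h2).2
    have h3 := zv_dist hs' ha 0 k
    have h4 := zv_dist hs' ha k 1
    rw [zero_add, hs'.zero] at h3
    rw [hz] at h3
    generalize mu (s k / 2) (s (k + 1)) (s' k / 2) (s' (k + 1))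
      ‖x - zv s (gp b x) (gs b s x) (k + 1)‖ • (x - zv s (gp b x) (gs b s x) (k + 1)) = v at *
    have h5 : ‖zv s' (gp b x) (gs b s x) (k + 1) - zv s' (gp b x) (gs b s x) k‖ ≤ s' k / 2 := by
      have := hs'.pos k
      rw [zv_succ, add_sub_cancel_left, pi_norm_le_iff_of_nonneg (by linarith)]
      intro i
      simp only [Pi.smul_apply, smul_eq_mul, Real.norm_eq_abs]
      rcases ha.pm i k with h | h <;> rw [h, abs_le] <;> constructor <;> linarith
    have h6 := norm_add₃_le (a := zv s' (gp b x) (gs b s x) k - gp b x)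
      (b := zv s' (gp b x) (gs b s x) (k + 1) - zv s' (gp b x) (gs b s x) k) (c := v)
    have e : zv s' (gp b x) (gs b s x) k - gp b x +
      (zv s' (gp b x) (gs b s x) (k + 1) - zv s' (gp b x) (gs b s x) k) + v =
      zv s' (gp b x) (gs b s x) (k + 1) + v - gp b x := by abel
    rw [e] at h6
    linarith

lemma CC_lt {b : Fin 4 → ℝ → ℝ} {s : ℕ → ℝ} (hs : Scale s) {x : X4} (hx : x ∈ CC b s) (k : ℕ) :
    rho b s x k < s k := rho_lt_of_succ hs ((hx (k + 1)).trans_lt (hs.half k))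

lemma Fm_deriv {b : Fin 4 → ℝ → ℝ} (hb : ∀ i, Base (b i)) {s s' : ℕ → ℝ} (hs : Scale s)
    (hs' : Scale s') (hk : Summable (kap s s')) (hr : Tendsto (fun k => s' k / s k) atTop (nhds 0))
    {x : X4} (hx : x ∈ CC b s) {ε : ℝ} (hε : 0 < ε) :
    ∀ᶠ y in nhds x, ‖Fm b s s' y - Fm b s s' x‖ ≤ ε * ‖y - x‖ := by
  have ht : Tendsto (fun k => s' k / s k + ∑' j, kap s s' (j + k)) atTop (nhds 0) := by
    simpa using hr.add (tendsto_sum_nat_add (kap s s'))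
  obtain ⟨k, hk1⟩ := (ht.eventually (gt_mem_nhds hε)).exists
  have ha := adm_greedy b s x
  have hlt : ‖x - zv s (gp b x) (gs b s x) k‖ < s k := by rw [← cv_eq_zv]; exact CC_lt hs hx k
  have hev : ∀ᶠ y in nhds x, ‖y - zv s (gp b x) (gs b s x) k‖ < s k :=
    (isOpen_lt (by fun_prop) continuous_const).mem_nhds hlt
  filter_upwards [hev] with y hy
  have h1 := Fm_sub_FF_lip hb hs hs' hk k y x
  have h2 : ‖FF b s s' k y - FF b s s' k x‖ = s' k / s k * ‖y - x‖ := by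
    rw [(FF_formula hb hs hs' ha y k).1 hy.le, (FF_formula hb hs hs' ha x k).1 hlt.le,
      add_sub_add_left_eq_sub, ← smul_sub, sub_sub_sub_cancel_right, norm_smul, Real.norm_eq_abs,
      abs_of_pos (div_pos (hs'.pos k) (hs.pos k))]
  have h3 := norm_add_le (FF b s s' k y - FF b s s' k x)
    ((Fm b s s' y - FF b s s' k y) - (Fm b s s' x - FF b s s' k x))
  have e : FF b s s' k y - FF b s s' k x +
    ((Fm b s s' y - FF b s s' k y) - (Fm b s s' x - FF b s s' k x)) =
    Fm b s s' y - Fm b s s' x := by abel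
  rw [e] at h3
  calc _ ≤ (s' k / s k + ∑' j, kap s s' (j + k)) * ‖y - x‖ := by rw [add_mul]; linarith
    _ ≤ _ := by gcongr

/-! ### The concrete scales -/

lemma exists_base (m : ℕ) : ∃ b : ℝ → ℝ, Base b ∧
    range b = {p | ∃ n : ℤ, |n| ≤ (m : ℤ) ∧ p = 2 * (n : ℝ)} := by
  set S : Set ℝ := {p | ∃ n : ℤ, |n| ≤ (m : ℤ) ∧ p = 2 * (n : ℝ)} with hS
  have hfin : S.Finite := by
    refine ((Set.finite_Icc (-(m : ℤ)) m).image (fun n : ℤ => 2 * (n : ℝ))).subset ?_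
    rintro p ⟨n, hn, rfl⟩
    exact ⟨n, abs_le.1 hn, rfl⟩
  have hne : S.Nonempty := ⟨0, 0, by simp, by simp⟩
  have hex : ∀ t : ℝ, ∃ p ∈ S, ∀ q ∈ S, |t - p| ≤ |t - q| := fun t =>
    Set.exists_min_image S (fun p => |t - p|) hfin hne
  choose b hbS hbmin using hex
  refine ⟨b, ⟨?_, fun t u => hbmin t _ (hbS u)⟩, ?_⟩
  · intro t u hne
    obtain ⟨n, -, hn⟩ := hbS t
    obtain ⟨n', -, hn'⟩ := hbS u
    rw [hn, hn'] at hne ⊢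
    have h1 : n - n' ≠ 0 := fun h => hne (by rw [sub_eq_zero.1 h])
    have h2 : (1 : ℤ) ≤ |n - n'| := Int.one_le_abs h1
    have h3 : (1 : ℝ) ≤ |(n : ℝ) - n'| := by exact_mod_cast h2
    rw [← mul_sub, abs_mul]; norm_num; linarith
  · apply Set.Subset.antisymm
    · rintro _ ⟨t, rfl⟩; exact hbS t
    · intro p hp
      have := hbmin p p hp
      rw [sub_self, abs_zero] at this
      have := abs_nonpos_iff.1 this
      exact ⟨p, by linarith⟩

lemma rB_succ (β : ℝ) (k : ℕ) : rB β (k + 1) = rB β k * (2 : ℝ) ^ (-(β + 1)) := by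
  unfold rB
  rw [← Real.rpow_add (by norm_num)]; congr 1; push_cast; ring

lemma rB_factor {β : ℝ} (hβ : 2 ≤ β) : (2 : ℝ) ^ (-(β + 1)) ≤ 1 / 8 := by
  have : (2 : ℝ) ^ (-(β + 1)) ≤ (2 : ℝ) ^ (-3 : ℝ) :=
    Real.rpow_le_rpow_of_exponent_le (by norm_num) (by linarith)
  refine this.trans (le_of_eq ?_)
  rw [Real.rpow_neg (by norm_num)]; norm_num

lemma rB_pos (β : ℝ) (k : ℕ) : 0 < rB β k := by unfold rB; positivity

lemma rB_le_eighth {β : ℝ} (hβ : 2 ≤ β) (k : ℕ) : rB β (k + 1) ≤ rB β k / 8 := by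
  rw [rB_succ]
  have := rB_factor hβ
  have := rB_pos β k
  nlinarith

lemma rB_scale {β : ℝ} (hβ : 2 ≤ β) : Scale (rB β) where
  pos := rB_pos β
  zero := by simp [rB]
  lt k := by
    have := rB_le_eighth hβ k
    have := rB_pos β k
    linarith

lemma rB_pow {β : ℝ} (hβ : 2 ≤ β) (k : ℕ) : rB β k ≤ (1 / 8 : ℝ) ^ k := by
  induction k with
  | zero => simp [rB]
  | succ k ih => rw [pow_succ]; have := rB_le_eighth hβ k; linarith

/-- gap -/
def gap (α : ℝ) (K k : ℕ) : ℝ := ((K : ℝ) + k + 1) ^ (-α) - ((K : ℝ) + (k + 1 : ℕ) + 1) ^ (-α)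

lemma gap_lower {α : ℝ} (hα : 0 < α) (K k : ℕ) :
    α * ((K : ℝ) + k + 2) ^ (-(α + 1)) ≤ gap α K k := by
  unfold gap
  set x : ℝ := (K : ℝ) + k + 1 with hx
  have hx0 : 0 < x := by positivity
  have e1 : (K : ℝ) + (k + 1 : ℕ) + 1 = x + 1 := by push_cast; ring
  have e2 : (K : ℝ) + k + 2 = x + 1 := by ring
  rw [e1, e2]
  have hu : 0 < x + 1 := by linarith
  have h1 : 1 + α * (x + 1)⁻¹ ≤ (x / (x + 1)) ^ (-α) := by
    rw [Real.rpow_def_of_pos (by positivity)]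
    have h2 := Real.log_le_sub_one_of_pos (show 0 < x / (x + 1) by positivity)
    have h3 : x / (x + 1) - 1 = -(x + 1)⁻¹ := by field_simp; ring
    have h4 := Real.add_one_le_exp (Real.log (x / (x + 1)) * -α)
    rw [h3] at h2
    nlinarith
  have h5 : x ^ (-α) = (x + 1) ^ (-α) * (x / (x + 1)) ^ (-α) := by
    rw [← Real.mul_rpow hu.le (by positivity)]; congr 1; field_simp
  have h6 : (x + 1) ^ (-(α + 1)) = (x + 1) ^ (-α) * (x + 1)⁻¹ := by
    rw [← Real.rpow_neg_one, ← Real.rpow_add hu]; congr 1; ring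
  rw [h5, h6]
  have h7 : 0 < (x + 1) ^ (-α) := by positivity
  nlinarith

lemma gap_pos {α : ℝ} (hα : 0 < α) (K k : ℕ) : 0 < gap α K k :=
  lt_of_lt_of_le (by positivity) (gap_lower hα K k)

lemma pow_neg_le_one {α : ℝ} (hα : 0 < α) (K k : ℕ) : ((K : ℝ) + k + 1) ^ (-α) ≤ 1 :=
  Real.rpow_le_one_of_one_le_of_nonpos (by
    have : (0 : ℝ) ≤ K := by positivity
    have : (0 : ℝ) ≤ k := by positivity
    linarith) (by linarith)

lemma pow_neg_le_one' {α : ℝ} (hα : 0 < α) (K : ℕ) : ((K : ℝ) + 1) ^ (-α) ≤ 1 := by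
  simpa using pow_neg_le_one hα K 0

lemma rA_diff (α : ℝ) (K k : ℕ) : rA α K k - 2 * rA α K (k + 1) =
    ((2 : ℝ) ^ k)⁻¹ * gap α K k / (1 + ((K : ℝ) + 1) ^ (-α)) := by
  unfold rA gap
  have : (0 : ℝ) < ((K : ℝ) + 1) ^ (-α) := by positivity
  rw [pow_succ]; field_simp; ring

lemma rA_diff_lower {α : ℝ} (hα : 0 < α) (K k : ℕ) :
    (1 / 2 : ℝ) ^ k * gap α K k / 2 ≤ rA α K k - 2 * rA α K (k + 1) := by
  rw [rA_diff]
  have h1 := pow_neg_le_one' hα K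
  have h2 := gap_pos hα K k
  have : (0 : ℝ) < ((K : ℝ) + 1) ^ (-α) := by positivity
  rw [one_div, inv_pow]
  gcongr
  linarith

lemma rA_lower {α : ℝ} (hα : 0 < α) (K k : ℕ) : (1 / 2 : ℝ) ^ k / 2 ≤ rA α K k := by
  unfold rA
  have h1 := pow_neg_le_one' hα K
  have : (0 : ℝ) < ((K : ℝ) + 1) ^ (-α) := by positivity
  have : (0 : ℝ) < ((K : ℝ) + k + 1) ^ (-α) := by positivity
  rw [one_div, inv_pow]
  have h2 : ((2 : ℝ) ^ k)⁻¹ ≤ ((2 : ℝ) ^ k)⁻¹ * (1 + ((K : ℝ) + k + 1) ^ (-α)) := by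
    have : (0 : ℝ) < ((2 : ℝ) ^ k)⁻¹ := by positivity
    nlinarith
  gcongr
  linarith

lemma rA_scale {α : ℝ} (hα : 0 < α) (K : ℕ) : Scale (rA α K) where
  pos k := lt_of_lt_of_le (by positivity) (rA_lower hα K k)
  zero := by
    unfold rA
    have h : 1 + ((K : ℝ) + 1) ^ (-α) ≠ 0 := by positivity
    simp [h]
  lt k := by
    have h := rA_diff_lower hα K k
    have : 0 < (1 / 2 : ℝ) ^ k * gap α K k / 2 := by have := gap_pos hα K k; positivity
    linarith

/-- majorant for `kap` -/
def MM (K : ℕ) (α : ℝ) (k : ℕ) : ℝ := 4 / α * ((1 / 4 : ℝ) ^ k * ((K : ℝ) + k + 2) ^ (α + 1))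

lemma MM_summable (K : ℕ) (α : ℝ) : Summable (MM K α) := by
  refine Summable.mul_left _ ?_
  set N := ⌈α + 1⌉₊
  have h1 : Summable (fun n : ℕ => (n : ℝ) ^ N * (1 / 4 : ℝ) ^ n) :=
    summable_pow_mul_geometric_of_norm_lt_one N (by norm_num)
  have h2 := ((summable_nat_add_iff (K + 2)).2 h1).mul_right ((4 : ℝ) ^ (K + 2))
  refine Summable.of_nonneg_of_le (fun k => by positivity) (fun k => ?_) h2
  have h3 : ((K : ℝ) + k + 2) ^ (α + 1) ≤ ((K : ℝ) + k + 2) ^ N := by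
    rw [← Real.rpow_natCast]
    refine Real.rpow_le_rpow_of_exponent_le ?_ (Nat.le_ceil _)
    have : (0 : ℝ) ≤ K := by positivity
    have : (0 : ℝ) ≤ k := by positivity
    linarith
  have e1 : ((k + (K + 2) : ℕ) : ℝ) = (K : ℝ) + k + 2 := by push_cast; ring
  have e2 : (1 / 4 : ℝ) ^ (k + (K + 2)) * 4 ^ (K + 2) = (1 / 4 : ℝ) ^ k := by
    rw [pow_add, mul_assoc, ← mul_pow]; norm_num
  rw [e1, mul_assoc, e2, mul_comm]
  gcongr

lemma kap_le {α : ℝ} (hα : 0 < α) (K : ℕ) {β : ℝ} (hβ : 2 ≤ β) (k : ℕ) :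
    kap (rA α K) (rB β) k ≤ MM K α k := by
  have hA := rA_scale hα K
  have hd := rA_diff_lower hα K k
  have hg := gap_pos hα K k
  have hgl := gap_lower hα K k
  have a1 := hA.pos (k + 1)
  have b0 := rB_pos β k
  have b1 := rB_pos β (k + 1)
  have b2 := rB_le_eighth hβ k
  have hbp := rB_pow hβ k
  have hr : rA α K k ≤ 4 * rA α K (k + 1) := by
    have h1 := rA_lower hα K (k + 1)
    have h2 : rA α K k ≤ (1 / 2 : ℝ) ^ k := hA.le_pow k
    rw [pow_succ] at h1; linarith
  have h4 : rB β (k + 1) * (rA α K k / 2) ≤ rB β k / 2 * rA α K (k + 1) := by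
    nlinarith [hA.pos k, mul_le_mul b2 hr (hA.pos k).le (by linarith : 0 ≤ rB β k / 8),
      mul_pos b0 a1]
  have hw : 0 < rA α K k / 2 - rA α K (k + 1) := sub_pos.2 (hA.half k)
  have step1 : kap (rA α K) (rB β) k ≤ rB β k / (rA α K k / 2 - rA α K (k + 1)) := by
    unfold kap
    rw [abs_div, abs_of_pos hw, abs_of_nonpos (by linarith)]
    calc _ ≤ (rB β k / 2 * rA α K (k + 1)) / (rA α K k / 2 - rA α K (k + 1)) *
          (2 / rA α K (k + 1)) := by
          gcongr
          have : 0 ≤ rB β (k + 1) * (rA α K k / 2) := by have := hA.pos k; positivity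
          linarith
      _ = _ := by
          generalize rA α K k / 2 - rA α K (k + 1) = w at *
          field_simp
  refine step1.trans ?_
  set u : ℝ := (K : ℝ) + k + 2 with hu
  have hu0 : 0 < u := by positivity
  have hw2 : (1 / 2 : ℝ) ^ k * (α * u ^ (-(α + 1))) / 4 ≤ rA α K k / 2 - rA α K (k + 1) := by
    have : (1 / 2 : ℝ) ^ k * (α * u ^ (-(α + 1))) ≤ (1 / 2 : ℝ) ^ k * gap α K k := by gcongr
    linarith
  calc rB β k / (rA α K k / 2 - rA α K (k + 1)) ≤
      (1 / 8 : ℝ) ^ k / ((1 / 2 : ℝ) ^ k * (α * u ^ (-(α + 1))) / 4) := by gcongr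
    _ = MM K α k := by
      unfold MM
      rw [← hu, Real.rpow_neg hu0.le]
      have e : (1 / 8 : ℝ) ^ k = (1 / 4 : ℝ) ^ k * (1 / 2 : ℝ) ^ k := by
        rw [← mul_pow]; norm_num
      rw [e]
      have : (0 : ℝ) < (1 / 2 : ℝ) ^ k := by positivity
      generalize (1 / 2 : ℝ) ^ k = y at *
      generalize (1 / 4 : ℝ) ^ k = y' at *
      have : 0 < u ^ (α + 1) := by positivity
      field_simp

lemma kap_summable {α : ℝ} (hα : 0 < α) (K : ℕ) {β : ℝ} (hβ : 2 ≤ β) :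
    Summable (kap (rA α K) (rB β)) :=
  Summable.of_nonneg_of_le (fun k => kap_nonneg (rA_scale hα K) _ k) (kap_le hα K hβ)
    (MM_summable K α)

lemma kap_tsum_le {α : ℝ} (hα : 0 < α) (K : ℕ) {β : ℝ} (hβ : 2 ≤ β) :
    ∑' k, kap (rA α K) (rB β) k ≤ ∑' k, MM K α k :=
  (kap_summable hα K hβ).tsum_le_tsum (kap_le hα K hβ) (MM_summable K α)

lemma ratio_tendsto {α : ℝ} (hα : 0 < α) (K : ℕ) {β : ℝ} (hβ : 2 ≤ β) :
    Tendsto (fun k => rB β k / rA α K k) atTop (nhds 0) := by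
  have h : Tendsto (fun k : ℕ => 2 * (1 / 4 : ℝ) ^ k) atTop (nhds (2 * 0)) :=
    (tendsto_pow_atTop_nhds_zero_of_lt_one (by norm_num) (by norm_num)).const_mul 2
  rw [mul_zero] at h
  refine squeeze_zero (fun k => (div_pos (rB_pos β k) ((rA_scale hα K).pos k)).le) (fun k => ?_) h
  rw [div_le_iff₀ ((rA_scale hα K).pos k)]
  have h1 := rA_lower hα K k
  have h2 := rB_pow hβ k
  have e : (1 / 8 : ℝ) ^ k = (1 / 4 : ℝ) ^ k * (1 / 2 : ℝ) ^ k := by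
    rw [← mul_pow]; norm_num
  have h3 : (0 : ℝ) < (1 / 4 : ℝ) ^ k := by positivity
  rw [e] at h2
  nlinarith

/-! ### The plates -/

lemma cantor1_iff {b : ℝ → ℝ} (hb : Base b) {s : ℕ → ℝ} (hs : Scale s) (t : ℝ) :
    (∃ p ∈ range b, t - p ∈ cantorTypeSet1 s) ↔ ∀ k, dd b s t k ≤ s k := by
  constructor
  · rintro ⟨p, hp, h⟩
    have h1 : ∀ k, dd b s t (k + 1) ≤ s (k + 1) := by
      intro k
      have h2 := Set.mem_iInter₂.1 h (k + 1) (by omega)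
      obtain ⟨w, hw, h3⟩ := Set.mem_iUnion₂.1 h2
      set σ : ℕ → ℝ := fun j => if hj : j < k + 1 then w ⟨j, hj⟩ else 1 with hσ
      have hpm : ∀ j, σ j = 1 ∨ σ j = -1 := by
        intro j
        simp only [hσ]
        split_ifs with hj
        · exact hw _
        · left; rfl
      have e : t - zz s p σ (k + 1) = t - p - 2⁻¹ * ∑ j : Fin (k + 1), s j.1 * w j := by
        unfold zz
        rw [Finset.sum_range]
        have : ∀ j : Fin (k + 1), σ j.1 = w j := fun j => by simp only [hσ]; rw [dif_pos j.2]
        simp only [this]; ring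
      have h4 : |t - zz s p σ (k + 1)| < s (k + 1) := by rw [e]; exact h3
      rw [(dd_eq hb hs hp hpm t (k + 1)).1 h4.le]
      exact h4.le
    intro k
    exact (dd_lt_of_succ b ((h1 k).trans_lt (hs.half k))).le
  · intro h
    refine ⟨b t, ⟨t, rfl⟩, Set.mem_iInter₂.2 fun k _ => Set.mem_iUnion₂.2
      ⟨fun j => sgnp (t - cc b s t j.1), fun j => sgnp_pm _, ?_⟩⟩
    have h1 : dd b s t k < s k := dd_lt_of_succ b ((h (k + 1)).trans_lt (hs.half k))
    unfold dd at h1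
    rw [cc_eq_zz] at h1
    unfold zz at h1
    rw [Finset.sum_range, ← sub_sub] at h1
    exact h1

lemma tr_apply (n₁ n₂ n₃ : ℤ) : tr n₁ n₂ n₃ 0 = 2 * n₁ ∧ tr n₁ n₂ n₃ 1 = 2 * n₂ ∧
    tr n₁ n₂ n₃ 2 = 2 * n₃ ∧ tr n₁ n₂ n₃ 3 = 0 := by
  simp [tr]

/-- The bases used. -/
def bas (b b₀ : ℝ → ℝ) : Fin 4 → ℝ → ℝ := ![b, b, b, b₀]

lemma plate_iff {m : ℕ} {b b₀ : ℝ → ℝ} (hb : Base b) (hb₀ : Base b₀)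
    (hr : range b = {p | ∃ n : ℤ, |n| ≤ (m : ℤ) ∧ p = 2 * (n : ℝ)})
    (hr₀ : range b₀ = {p | ∃ n : ℤ, |n| ≤ ((0 : ℕ) : ℤ) ∧ p = 2 * (n : ℝ)})
    {s : ℕ → ℝ} (hs : Scale s) (x : E4) :
    x ∈ cantorPlate s m ↔ WithLp.ofLp x ∈ CC (bas b b₀) s := by
  have h0 : WithLp.ofLp x ∈ CC (bas b b₀) s ↔
      ∀ i k, dd (bas b b₀ i) s (x i) k ≤ s k := by
    unfold CC
    simp only [Set.mem_setOf_eq]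
    constructor
    · exact fun h i k => (rho_le_iff (hs.pos k).le).1 (h k) i
    · exact fun h k => (rho_le_iff (hs.pos k).le).2 fun i => h i k
  have hr₀' : ∀ p, p ∈ range b₀ ↔ p = 0 := by
    intro p
    rw [hr₀]
    constructor
    · rintro ⟨n, hn, rfl⟩
      have : n = 0 := by simpa using hn
      simp [this]
    · rintro rfl
      exact ⟨0, by simp, by simp⟩
  rw [h0, Fin.forall_fin_succ, Fin.forall_fin_succ, Fin.forall_fin_succ, Fin.forall_fin_succ]
  change _ ↔ (∀ k, dd b s (x 0) k ≤ s k) ∧ (∀ k, dd b s (x 1) k ≤ s k) ∧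
    (∀ k, dd b s (x 2) k ≤ s k) ∧ (∀ k, dd b₀ s (x 3) k ≤ s k) ∧ _
  rw [← cantor1_iff hb hs, ← cantor1_iff hb hs, ← cantor1_iff hb hs, ← cantor1_iff hb₀ hs, hr]
  constructor
  · rintro ⟨n₁, n₂, n₃, h1, h2, h3, h⟩
    obtain ⟨t0, t1, t2, t3⟩ := tr_apply n₁ n₂ n₃
    have g0 := h 0
    have g1 := h 1
    have g2 := h 2
    have g3 := h 3
    rw [PiLp.sub_apply] at g0 g1 g2 g3
    rw [t0] at g0
    rw [t1] at g1
    rw [t2] at g2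
    rw [t3] at g3
    exact ⟨⟨_, ⟨n₁, h1, rfl⟩, g0⟩, ⟨_, ⟨n₂, h2, rfl⟩, g1⟩, ⟨_, ⟨n₃, h3, rfl⟩, g2⟩,
      ⟨0, (hr₀' 0).2 rfl, g3⟩, fun i => i.elim0⟩
  · rintro ⟨⟨_, ⟨n₁, h1, rfl⟩, g0⟩, ⟨_, ⟨n₂, h2, rfl⟩, g1⟩, ⟨_, ⟨n₃, h3, rfl⟩, g2⟩, ⟨p, hp, g3⟩, -⟩
    rw [hr₀'] at hp
    subst hp
    obtain ⟨t0, t1, t2, t3⟩ := tr_apply n₁ n₂ n₃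
    refine ⟨n₁, n₂, n₃, h1, h2, h3, fun j => ?_⟩
    rw [PiLp.sub_apply]
    fin_cases j
    · change x 0 - tr n₁ n₂ n₃ 0 ∈ _; rw [t0]; exact g0
    · change x 1 - tr n₁ n₂ n₃ 1 ∈ _; rw [t1]; exact g1
    · change x 2 - tr n₁ n₂ n₃ 2 ∈ _; rw [t2]; exact g2
    · change x 3 - tr n₁ n₂ n₃ 3 ∈ _; rw [t3]; exact g3

/-! ### The stretch in the last coordinate -/

def cl (t : ℝ) : ℝ := max (-1) (min t 1)

def hh (a t : ℝ) : ℝ := cl t + a * (t - cl t)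

lemma cl_cases (t : ℝ) : (t ≤ -1 ∧ cl t = -1) ∨ (-1 ≤ t ∧ t ≤ 1 ∧ cl t = t) ∨ (1 ≤ t ∧ cl t = 1) := by
  unfold cl
  rcases le_total t (-1) with h | h
  · left; rw [min_eq_left (by linarith), max_eq_left h]; exact ⟨h, rfl⟩
  rcases le_total t 1 with h' | h'
  · right; left; rw [min_eq_left h', max_eq_right h]; exact ⟨h, h', rfl⟩
  · right; right; rw [min_eq_right h', max_eq_right (by norm_num)]; exact ⟨h', rfl⟩

lemma cl_hh {a : ℝ} (ha : 0 < a) (t : ℝ) : cl (hh a t) = cl t := by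
  unfold hh
  rcases cl_cases t with ⟨h, e⟩ | ⟨h, h', e⟩ | ⟨h, e⟩
  · rw [e]
    have : -1 + a * (t - -1) ≤ -1 := by nlinarith
    rcases cl_cases (-1 + a * (t - -1)) with ⟨_, g⟩ | ⟨_, _, g⟩ | ⟨_, g⟩ <;> linarith
  · rw [e, sub_self, mul_zero, add_zero, e]
  · rw [e]
    have : 1 ≤ 1 + a * (t - 1) := by nlinarith
    rcases cl_cases (1 + a * (t - 1)) with ⟨_, g⟩ | ⟨_, _, g⟩ | ⟨_, g⟩ <;> linarith

lemma hh_inv {a : ℝ} (ha : 0 < a) (t : ℝ) : hh a⁻¹ (hh a t) = t := by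
  have h := cl_hh ha t
  unfold hh at *
  rw [h]; field_simp; ring

lemma hh_fix {a t : ℝ} (h : |t| ≤ 1) : hh a t = t := by
  rw [abs_le] at h
  unfold hh
  rcases cl_cases t with ⟨g, e⟩ | ⟨_, _, e⟩ | ⟨g, e⟩
  · rw [e]; have : t = -1 := by linarith
    rw [this]; ring
  · rw [e]; ring
  · rw [e]; have : t = 1 := by linarith
    rw [this]; ring

lemma hh_box {a t c : ℝ} (ha : 0 < a) (hc : 0 ≤ c) (h : |t| ≤ 1 + c) : |hh a t| ≤ 1 + a * c := by
  rw [abs_le] at h ⊢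
  unfold hh
  have := mul_nonneg ha.le hc
  rcases cl_cases t with ⟨g, e⟩ | ⟨_, _, e⟩ | ⟨g, e⟩ <;> rw [e] <;> constructor <;> nlinarith

lemma cl_lip (t u : ℝ) : |cl t - cl u| ≤ |t - u| ∧ |(t - cl t) - (u - cl u)| ≤ |t - u| := by
  rcases cl_cases t with ⟨g, e⟩ | ⟨_, _, e⟩ | ⟨g, e⟩ <;>
  rcases cl_cases u with ⟨g', e'⟩ | ⟨_, _, e'⟩ | ⟨g', e'⟩ <;> rw [e, e'] <;>
  refine ⟨abs_le.2 ⟨?_, ?_⟩, abs_le.2 ⟨?_, ?_⟩⟩ <;>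
  linarith [le_abs_self (t - u), neg_le_abs (t - u), abs_nonneg (t - u)]

lemma hh_lip {a : ℝ} (ha : 0 < a) (t u : ℝ) : |hh a t - hh a u| ≤ (1 + a) * |t - u| := by
  obtain ⟨h1, h2⟩ := cl_lip t u
  have e : hh a t - hh a u = (cl t - cl u) + a * ((t - cl t) - (u - cl u)) := by
    unfold hh; ring
  rw [e]
  refine (abs_add_le _ _).trans ?_
  rw [abs_mul, abs_of_pos ha]
  nlinarith

def HH (a : ℝ) (x : X4) : X4 := fun i => if i = 3 then hh a (x i) else x i

lemma HH_inv {a : ℝ} (ha : 0 < a) (x : X4) : HH a⁻¹ (HH a x) = x := by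
  funext i
  unfold HH
  by_cases h : i = 3
  · simp only [h, if_true]; exact hh_inv ha _
  · simp only [h, if_false]

lemma HH_lip {a : ℝ} (ha : 0 < a) (x y : X4) : ‖HH a x - HH a y‖ ≤ (1 + a) * ‖x - y‖ := by
  rw [pi_norm_le_iff_of_nonneg (by positivity)]
  intro i
  have h1 : |x i - y i| ≤ ‖x - y‖ := norm_le_pi_norm (x - y) i
  rw [Pi.sub_apply, Real.norm_eq_abs]
  unfold HH
  split_ifs with h
  · exact (hh_lip ha _ _).trans (by gcongr)
  · have := norm_nonneg (x - y)
    nlinarith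

lemma HH_fix {a : ℝ} {x : X4} (h : |x 3| ≤ 1) : HH a x = x := by
  funext i
  unfold HH
  split_ifs with hi
  · subst hi; exact hh_fix h
  · rfl

/-! ### Transfer to Euclidean space -/

lemma norm_ofLp_le (x : E4) : ‖WithLp.ofLp x‖ ≤ ‖x‖ := by
  rw [pi_norm_le_iff_of_nonneg (norm_nonneg _)]
  exact fun i => PiLp.norm_apply_le x i

lemma norm_le_ofLp (x : E4) : ‖x‖ ≤ 2 * ‖WithLp.ofLp x‖ := by
  rw [EuclideanSpace.norm_eq]
  refine Real.sqrt_le_iff.2 ⟨by positivity, ?_⟩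
  have h : ∀ i, ‖x i‖ ^ 2 ≤ ‖WithLp.ofLp x‖ ^ 2 := fun i => by
    have := norm_le_pi_norm (WithLp.ofLp x) i
    gcongr
  rw [Fin.sum_univ_four]
  nlinarith [h 0, h 1, h 2, h 3]

def lift4 (f : X4 → X4) (x : E4) : E4 := WithLp.toLp 2 (f (WithLp.ofLp x))

lemma lift4_dist (f : X4 → X4) (x y : E4) :
    dist (lift4 f x) (lift4 f y) ≤ 2 * ‖f (WithLp.ofLp x) - f (WithLp.ofLp y)‖ := by
  rw [dist_eq_norm]; exact norm_le_ofLp _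

lemma ofLp_dist (x y : E4) : ‖WithLp.ofLp x - WithLp.ofLp y‖ ≤ dist x y := by
  rw [dist_eq_norm]; exact norm_ofLp_le (x - y)

lemma lift4_continuous {f : X4 → X4} (hf : Continuous f) : Continuous (lift4 f) :=
  (PiLp.continuous_toLp 2 _).comp (hf.comp (PiLp.continuous_ofLp 2 _))

/-- local Lipschitz property off a set -/
def LocLip (f : X4 → X4) (C : Set X4) : Prop :=
  ∀ x, x ∉ C → ∃ U : Set X4, IsOpen U ∧ x ∈ U ∧ ∃ L : ℝ, 0 < L ∧
      ∀ y ∈ U, ∀ z ∈ U, ‖f y - f z‖ ≤ L * ‖y - z‖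

lemma locallyBiLip {f g : X4 → X4} {C C' : Set X4} (hf : Continuous f)
    (hgf : ∀ x, g (f x) = x) (hfC : LocLip f C) (hgC : LocLip g C')
    (hm : ∀ x, x ∉ C → f x ∉ C') {S P : Set E4} (hP : ∀ x, x ∈ P ↔ WithLp.ofLp x ∈ C) :
    LocallyBiLipschitzOn (lift4 f) (S \ P) := by
  rintro x ⟨-, hx⟩
  rw [hP] at hx
  obtain ⟨U, hU, hxU, L, hL, hUL⟩ := hfC _ hx
  obtain ⟨V, hV, hxV, M, hM, hVM⟩ := hgC _ (hm _ hx)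
  refine ⟨WithLp.ofLp ⁻¹' (U ∩ f ⁻¹' V), (hU.inter (hV.preimage hf)).preimage
    (PiLp.continuous_ofLp 2 _), ⟨hxU, hxV⟩, 2 * (L + M), by positivity, ?_⟩
  rintro y ⟨⟨hyU, hyV⟩, -⟩ z ⟨⟨hzU, hzV⟩, -⟩
  have h1 := hUL _ hyU _ hzU
  have h2 := hVM _ hyV _ hzV
  rw [hgf, hgf] at h2
  have hd := dist_nonneg (x := y) (y := z)
  constructor
  · rw [inv_mul_le_iff₀ (by positivity)]
    have h3 : dist y z ≤ 2 * ‖WithLp.ofLp y - WithLp.ofLp z‖ := by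
      rw [dist_eq_norm]; exact norm_le_ofLp (y - z)
    have h4 := ofLp_dist (lift4 f y) (lift4 f z)
    change ‖f (WithLp.ofLp y) - f (WithLp.ofLp z)‖ ≤ _ at h4
    have h5 := dist_nonneg (x := lift4 f y) (y := lift4 f z)
    have h6 : M * ‖f (WithLp.ofLp y) - f (WithLp.ofLp z)‖ ≤ M * dist (lift4 f y) (lift4 f z) := by
      gcongr
    nlinarith [mul_nonneg hL.le h5]
  · have h3 := lift4_dist f y z
    have h4 : L * ‖WithLp.ofLp y - WithLp.ofLp z‖ ≤ L * dist y z := by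
      gcongr; exact ofLp_dist y z
    nlinarith [mul_nonneg hM.le hd]

lemma Fm_box {m : ℕ} {b b₀ : ℝ → ℝ} (hb : Base b) (hb₀ : Base b₀)
    (hr : range b = {p | ∃ n : ℤ, |n| ≤ (m : ℤ) ∧ p = 2 * (n : ℝ)})
    (hr₀ : range b₀ = {p | ∃ n : ℤ, |n| ≤ ((0 : ℕ) : ℤ) ∧ p = 2 * (n : ℝ)})
    {s s' : ℕ → ℝ} (hs : Scale s) (hs' : Scale s') {t : ℝ} (ht : 0 ≤ t) {x : X4}
    (hx : WithLp.toLp 2 x ∈ Rbox m t) : WithLp.toLp 2 (Fm (bas b b₀) s s' x) ∈ Rbox m t := by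
  have hbas : ∀ i, Base (bas b b₀ i) := by
    intro i; fin_cases i <;> first | exact hb | exact hb₀
  rcases Fm_range hbas hs hs' x with h | ⟨p, hp, h⟩
  · rwa [h]
  · have hi : ∀ i, |Fm (bas b b₀) s s' x i - p i| ≤ 1 := fun i =>
      (norm_le_pi_norm (Fm (bas b b₀) s s' x - p) i).trans h
    have hm : ∀ q ∈ range b, |q| ≤ 2 * (m : ℝ) := by
      rw [hr]
      rintro _ ⟨n, hn, rfl⟩
      rw [abs_mul, abs_two]
      have : |(n : ℝ)| ≤ m := by exact_mod_cast hn
      linarith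
    have hm0 : ∀ q ∈ range b₀, q = 0 := by
      rw [hr₀]
      rintro _ ⟨n, hn, rfl⟩
      have : n = 0 := by simpa using hn
      simp [this]
    have p0 := hm _ (hp 0)
    have p1 := hm _ (hp 1)
    have p2 := hm _ (hp 2)
    have p3 := hm0 _ (hp 3)
    have i0 := hi 0
    have i1 := hi 1
    have i2 := hi 2
    have i3 := hi 3
    rw [p3] at i3
    refine ⟨?_, ?_, ?_, ?_⟩
    · change |Fm (bas b b₀) s s' x 0| ≤ _
      rw [abs_le] at *; constructor <;> linarith
    · change |Fm (bas b b₀) s s' x 1| ≤ _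
      rw [abs_le] at *; constructor <;> linarith
    · change |Fm (bas b b₀) s s' x 2| ≤ _
      rw [abs_le] at *; constructor <;> linarith
    · change |Fm (bas b b₀) s s' x 3| ≤ _
      rw [abs_le] at *; constructor <;> linarith

lemma HH_box {m : ℕ} {a c : ℝ} (ha : 0 < a) (hc : 0 ≤ c) {x : X4}
    (hx : WithLp.toLp 2 x ∈ Rbox m c) : WithLp.toLp 2 (HH a x) ∈ Rbox m (a * c) := by
  obtain ⟨h0, h1, h2, h3⟩ := hx
  exact ⟨h0, h1, h2, hh_box ha hc h3⟩

lemma LocLip_of_comp_left {f h : X4 → X4} {C : Set X4} {L : ℝ} (hL : 0 < L)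
    (hh : ∀ x y, ‖h x - h y‖ ≤ L * ‖x - y‖) (hf : LocLip f C) : LocLip (h ∘ f) C := by
  intro x hx
  obtain ⟨U, hU, hxU, M, hM, hUM⟩ := hf x hx
  refine ⟨U, hU, hxU, L * M, by positivity, fun y hy z hz => ?_⟩
  refine (hh _ _).trans ?_
  rw [mul_assoc]
  exact mul_le_mul_of_nonneg_left (hUM y hy z hz) hL.le

lemma LocLip_of_comp_right {f h : X4 → X4} {C C' : Set X4} {L : ℝ} (hL : 0 < L)
    (hh : ∀ x y, ‖h x - h y‖ ≤ L * ‖x - y‖) (hc : Continuous h) (hm : ∀ x, x ∉ C' → h x ∉ C)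
    (hf : LocLip f C) : LocLip (f ∘ h) C' := by
  intro x hx
  obtain ⟨U, hU, hxU, M, hM, hUM⟩ := hf _ (hm x hx)
  refine ⟨h ⁻¹' U, hU.preimage hc, hxU, M * L, by positivity, fun y hy z hz => ?_⟩
  refine (hUM _ hy _ hz).trans ?_
  rw [mul_assoc]
  exact mul_le_mul_of_nonneg_left (hh y z) hM.le

lemma HH_continuous {a : ℝ} (ha : 0 < a) : Continuous (HH a) := by
  refine (LipschitzWith.of_dist_le_mul (K := ⟨1 + a, by positivity⟩) fun x y => ?_).continuous
  rw [dist_eq_norm, dist_eq_norm]; exact HH_lip ha x y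

/-- Existence of the squeezing map `G̃ = G̃_{K,N,m,η} : R_{m,η} → R_{m,13}` and the
stretching map `G = G_{K,N,m,η} : R_{m,13} → R_{m,η}` (homeomorphisms, as continuous
bijections of compact sets) exchanging the Cantor plates `C_{A,K,m}` and `C_{B,m}`,
with `G ∘ G̃ = id` on `∂R_{m,η}` and on `C_{A,K,m}`, locally bi-Lipschitz off the
plates, `G̃` Lipschitz with constant depending only on `K`, `α`, `η`, and `G̃`
having vanishing differential on `C_{A,K,m}`. -/
theorem exists_squeeze_and_stretch :
    ∃ β₀ : ℝ, 2 < β₀ ∧ ∃ Lfun : ℕ → ℝ → ℝ → ℝ≥0,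
      ∀ β : ℝ, β₀ < β → ∀ α : ℝ, 0 < α → ∀ (K N m : ℕ) (η : ℝ), 0 < η →
        ∃ Gt G : E4 → E4,
          Set.BijOn Gt (Rbox m η) (Rbox m 13) ∧ ContinuousOn Gt (Rbox m η) ∧
          Set.BijOn G (Rbox m 13) (Rbox m η) ∧ ContinuousOn G (Rbox m 13) ∧
          Gt '' cantorPlate (rA α K) m = cantorPlate (rB β) m ∧
          G '' cantorPlate (rB β) m = cantorPlate (rA α K) m ∧
          (∀ x ∈ Rbox m η \ interior (Rbox m η), G (Gt x) = x) ∧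
          (∀ x ∈ cantorPlate (rA α K) m, G (Gt x) = x) ∧
          LocallyBiLipschitzOn Gt (Rbox m η \ cantorPlate (rA α K) m) ∧
          LocallyBiLipschitzOn G (Rbox m 13 \ cantorPlate (rB β) m) ∧
          LipschitzOnWith (Lfun K α η) Gt (Rbox m η) ∧
          (∀ x ∈ cantorPlate (rA α K) m, HasFDerivAt Gt (0 : E4 →L[ℝ] E4) x) := by
  refine ⟨3, by norm_num, fun K α η => Real.toNNReal (2 * ((1 + 13 / η) * (1 + ∑' k, MM K α k))),
    ?_⟩
  intro β hβ α hα K _ m η hη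
  have hβ2 : 2 ≤ β := by linarith
  obtain ⟨b, hb, hr⟩ := exists_base m
  obtain ⟨b₀, hb₀, hr₀⟩ := exists_base 0
  have hbas : ∀ i, Base (bas b b₀ i) := by
    intro i; fin_cases i <;> first | exact hb | exact hb₀
  have hA := rA_scale hα K
  have hB := rB_scale hβ2
  set a : ℝ := 13 / η with ha_def
  have ha : 0 < a := by positivity
  have ha' : 0 < a⁻¹ := by positivity
  set F := Fm (bas b b₀) (rA α K) (rB β) with hF
  set F' := Fm (bas b b₀) (rB β) (rA α K) with hF'
  set CA := CC (bas b b₀) (rA α K) with hCA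
  set CB := CC (bas b b₀) (rB β) with hCB
  have hFF' : ∀ x, F' (F x) = x := Fm_inv hbas hA hB
  have hF'F : ∀ x, F (F' x) = x := Fm_inv hbas hB hA
  have hFc : Continuous F := Fm_continuous hbas hA hB
  have hF'c : Continuous F' := Fm_continuous hbas hB hA
  have hPA : ∀ x, x ∈ cantorPlate (rA α K) m ↔ WithLp.ofLp x ∈ CA := plate_iff hb hb₀ hr hr₀ hA
  have hPB : ∀ x, x ∈ cantorPlate (rB β) m ↔ WithLp.ofLp x ∈ CB := plate_iff hb hb₀ hr hr₀ hB
  have hFA : ∀ x ∈ CA, F x ∈ CB := fun x hx => Fm_mem_CC hbas hA hB hx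
  have hFB : ∀ x ∈ CB, F' x ∈ CA := fun x hx => Fm_mem_CC hbas hB hA hx
  have hHi : ∀ x, HH a⁻¹ (HH a x) = x := HH_inv ha
  have hHi' : ∀ x, HH a (HH a⁻¹ x) = x := by
    intro x; have := HH_inv ha' x; rwa [inv_inv] at this
  have hfixB : ∀ c : ℝ, ∀ x ∈ CB, HH c x = x := by
    intro c x hx
    refine HH_fix ?_
    have h1 := (dd_le_rho (bas b b₀) (rB β) x 0 3).trans (hx 0)
    rw [hB.zero] at h1
    change |x 3 - b₀ (x 3)| ≤ 1 at h1
    have h2 : b₀ (x 3) ∈ range b₀ := ⟨_, rfl⟩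
    rw [hr₀] at h2
    obtain ⟨n, hn, h3⟩ := h2
    have : n = 0 := by simpa using hn
    rw [h3, this] at h1
    simpa using h1
  set f : X4 → X4 := HH a ∘ F with hf
  set g : X4 → X4 := F' ∘ HH a⁻¹ with hg
  have hgf : ∀ x, g (f x) = x := fun x => by simp only [hf, hg, Function.comp, hHi, hFF']
  have hfg : ∀ x, f (g x) = x := fun x => by simp only [hf, hg, Function.comp, hHi', hF'F]
  have hfc : Continuous f := (HH_continuous ha).comp hFc
  have hgc : Continuous g := hF'c.comp (HH_continuous ha')
  have hfA : ∀ x ∈ CA, f x ∈ CB := fun x hx => by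
    simp only [hf, Function.comp]; rw [hfixB a _ (hFA x hx)]; exact hFA x hx
  have hgB : ∀ x ∈ CB, g x ∈ CA := fun x hx => by
    simp only [hg, Function.comp]; rw [hfixB a⁻¹ x hx]; exact hFB x hx
  have hfA' : ∀ x, x ∉ CA → f x ∉ CB := fun x hx h => hx (by rw [← hgf x]; exact hgB _ h)
  have hgB' : ∀ x, x ∉ CB → g x ∉ CA := fun x hx h => hx (by rw [← hfg x]; exact hfA _ h)
  have hlf : LocLip f CA := LocLip_of_comp_left (by positivity) (HH_lip ha)
    (fun x hx => Fm_loclip hbas hA (rB β) hx)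
  have hlg : LocLip g CB := LocLip_of_comp_right (C := CB) (by positivity) (HH_lip ha')
    (HH_continuous ha') (fun x hx h => hx (by
      rw [← hHi' x, hfixB a _ h]; exact h)) (fun x hx => Fm_loclip hbas hB (rA α K) hx)
  have hbf : ∀ x ∈ Rbox m η, lift4 f x ∈ Rbox m 13 := by
    intro x hx
    have h1 := HH_box (c := η) ha hη.le (Fm_box hb hb₀ hr hr₀ hA hB hη.le (x := WithLp.ofLp x) hx)
    have e : a * η = 13 := by rw [ha_def]; field_simp
    rw [e] at h1
    exact h1
  have hbg : ∀ x ∈ Rbox m 13, lift4 g x ∈ Rbox m η := by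
    intro x hx
    have h1 := HH_box (c := 13) ha' (by norm_num) (x := WithLp.ofLp x) hx
    have e : a⁻¹ * 13 = η := by rw [ha_def]; field_simp
    rw [e] at h1
    exact Fm_box hb hb₀ hr hr₀ hB hA hη.le h1
  have hLgf : ∀ x, lift4 g (lift4 f x) = x := fun x => by
    change WithLp.toLp 2 (g (f (WithLp.ofLp x))) = x
    rw [hgf]
  have hLfg : ∀ x, lift4 f (lift4 g x) = x := fun x => by
    change WithLp.toLp 2 (f (g (WithLp.ofLp x))) = x
    rw [hfg]
  have hlip : ∀ x y, ‖f x - f y‖ ≤ (1 + a) * (1 + ∑' k, MM K α k) * ‖x - y‖ := by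
    intro x y
    refine (HH_lip ha _ _).trans ?_
    rw [mul_assoc]
    refine mul_le_mul_of_nonneg_left ?_ (by positivity)
    refine (Fm_lip hbas hA hB (kap_summable hα K hβ2) x y).trans ?_
    exact mul_le_mul_of_nonneg_right (by linarith [kap_tsum_le hα K hβ2]) (norm_nonneg _)
  refine ⟨lift4 f, lift4 g, ?_, (lift4_continuous hfc).continuousOn, ?_,
    (lift4_continuous hgc).continuousOn, ?_, ?_, fun x _ => hLgf x, fun x _ => hLgf x,
    locallyBiLip hfc hgf hlf hlg hfA' hPA, locallyBiLip hgc hfg hlg hlf hgB' hPB, ?_, ?_⟩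
  · exact Set.InvOn.bijOn ⟨fun x _ => hLgf x, fun x _ => hLfg x⟩ hbf hbg
  · exact Set.InvOn.bijOn ⟨fun x _ => hLfg x, fun x _ => hLgf x⟩ hbg hbf
  · apply Set.Subset.antisymm
    · rintro _ ⟨x, hx, rfl⟩
      rw [hPB]; exact hfA _ ((hPA x).1 hx)
    · intro y hy
      exact ⟨lift4 g y, (hPA _).2 (hgB _ ((hPB y).1 hy)), hLfg y⟩
  · apply Set.Subset.antisymm
    · rintro _ ⟨x, hx, rfl⟩
      rw [hPA]; exact hgB _ ((hPB x).1 hx)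
    · intro y hy
      exact ⟨lift4 f y, (hPB _).2 (hfA _ ((hPA y).1 hy)), hLgf y⟩
  · refine LipschitzOnWith.of_dist_le_mul fun x _ y _ => ?_
    have hM : 0 ≤ ∑' k, MM K α k := tsum_nonneg fun k => by unfold MM; positivity
    rw [Real.coe_toNNReal _ (by positivity)]
    calc dist (lift4 f x) (lift4 f y) ≤ 2 * ‖f (WithLp.ofLp x) - f (WithLp.ofLp y)‖ :=
          lift4_dist f x y
      _ ≤ 2 * ((1 + a) * (1 + ∑' k, MM K α k) * ‖WithLp.ofLp x - WithLp.ofLp y‖) := by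
          gcongr; exact hlip _ _
      _ ≤ 2 * ((1 + a) * (1 + ∑' k, MM K α k) * dist x y) := by
          gcongr; exact ofLp_dist x y
      _ = _ := by ring
  · intro x hx
    rw [hPA] at hx
    rw [hasFDerivAt_iff_isLittleO_nhds_zero, ]
    rw [Asymptotics.isLittleO_iff]
    intro c hc
    have hc2 : 0 < c / (2 * (1 + a)) := by positivity
    have h1 := Fm_deriv hbas hA hB (kap_summable hα K hβ2) (ratio_tendsto hα K hβ2) hx hc2
    have h2 : Tendsto (fun h : E4 => WithLp.ofLp (x + h)) (nhds 0) (nhds (WithLp.ofLp x)) := by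
      have hcont : Continuous (fun h : E4 => WithLp.ofLp (x + h)) :=
        (PiLp.continuous_ofLp 2 _).comp (continuous_const.add continuous_id)
      have := hcont.tendsto 0
      simpa using this
    filter_upwards [h2.eventually h1] with h hh'
    have h3 := lift4_dist f (x + h) x
    have h4 := HH_lip ha (F (WithLp.ofLp (x + h))) (F (WithLp.ofLp x))
    have h5 := ofLp_dist (x + h) x
    rw [dist_eq_norm, add_sub_cancel_left] at h5
    rw [ContinuousLinearMap.zero_apply, sub_zero, ← dist_eq_norm]
    calc dist (lift4 f (x + h)) (lift4 f x)
        ≤ 2 * ((1 + a) * ‖F (WithLp.ofLp (x + h)) - F (WithLp.ofLp x)‖) :=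
          h3.trans (by gcongr; exact h4)
      _ ≤ 2 * ((1 + a) * (c / (2 * (1 + a)) * ‖WithLp.ofLp (x + h) - WithLp.ofLp x‖)) := by
          gcongr
      _ ≤ 2 * ((1 + a) * (c / (2 * (1 + a)) * ‖h‖)) := by gcongr
      _ = c * ‖h‖ := by field_simp
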